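/- arXiv:2204.06865 — 3 statements merged into one kernel-verified Lean document; each statement's English description precedes it below -/
import Mathlib

section
/- Let A be a commutative noetherian ring, let P ⊆ A be a prime ideal, and let s ∈ A \ P be such that the ideal P + (s) is a proper ideal of A. If a_1, …, a_n are elements of P whose images in the localization A_s form a regular sequence on A_s, then the A-module A_s/(a_1, …, a_n)A_s has projective dimension exactly n + 1 over A. -/
/-!
STATEMENT 1: Let A be a commutative noetherian ring, P ⊆ A a prime ideal, and s ∈ A \ P
with P + (s) a proper ideal of A.  If a_1, …, a_n ∈ P have images in A_s forming a regular
sequence on A_s, then the A-module A_s/(a_1, …, a_n)A_s has projective dimension exactly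
n + 1 over A.
-/

open CategoryTheory

universe u

/-- `Ext_A^i(M, N)` as an `A`-module. -/
noncomputable abbrev extGroup (A : Type u) [CommRing A] (M N : ModuleCat.{u} A) (i : ℕ) :
    ModuleCat A :=
  ((Ext A (ModuleCat.{u} A) i).obj (Opposite.op M)).obj N

/-- The projective dimension of an `A`-module `M`, defined as the least `n : ℕ∞` such that
`Ext_A^i(M, N) = 0` for every `A`-module `N` and every `i > n` (and `∞` if no such `n` exists). -/
noncomputable def projDim (A : Type u) [CommRing A] (M : ModuleCat.{u} A) : ℕ∞ :=
  sInf {n : ℕ∞ | ∀ (N : ModuleCat.{u} A) (i : ℕ), n < (i : ℕ∞) →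
    Subsingleton (extGroup A M N i)}

/-!
Since `A_s ≅ A[X]/(sX - 1)` and `sX - 1` is a nonzerodivisor, multiplication by `sX - 1` is a free
resolution `0 → A[X] → A[X] → A_s → 0`, and each step of the regular sequence raises the projective
dimension by at most one. Conversely, if `a₁, …, aₙ` annihilate `N`, the connecting maps embed
`Ext^k(M, N)` into `Ext^(k+n)(M/(a)M, N)`, because they are preceded by multiplications by `aᵢ`,
which vanish. It remains to see `Ext¹(A_s, N) ≠ 0` for `N = (A/P)[X]`. By the free resolution,
vanishing would solve `s f (k+1) - f k = X ^ k` in `N` for all `k`; comparing the coefficients at a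
degree `m` exceeding that of `f 0` shows that `s ^ (m+1)` divides `s ^ m` modulo `P`.
-/

open Polynomial nonZeroDivisors RingTheory.Sequence

section ExtComparison

variable {C : Type*} [Category* C] [Abelian C] {X Y : C}

lemma subsingleton_abelianExt_succ_iff [HasExt.{u} C] (Q : ProjectiveResolution X) (k : ℕ) :
    Subsingleton (Abelian.Ext.{u} X Y (k + 1)) ↔
      ∀ f : Q.complex.X (k + 1) ⟶ Y, Q.complex.d (k + 2) (k + 1) ≫ f = 0 →
        ∃ g : Q.complex.X k ⟶ Y, Q.complex.d (k + 1) k ≫ g = f := by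
  refine ⟨fun _ f hf => (Q.extMk_eq_zero_iff f (k + 2) rfl hf k rfl).1 (Subsingleton.elim _ _),
    fun h => subsingleton_of_forall_eq 0 fun z => ?_⟩
  obtain ⟨f, hf, rfl⟩ := Q.extMk_surjective z (k + 2) rfl
  exact (Q.extMk_eq_zero_iff f (k + 2) rfl hf k rfl).2 (h f hf)

lemma subsingleton_derivedExt_succ_iff {R : Type*} [Ring R] [Linear R C] [EnoughProjectives C]
    (Q : ProjectiveResolution X) (k : ℕ) :
    Subsingleton (((Ext R C (k + 1)).obj (Opposite.op X)).obj Y) ↔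
      ∀ f : Q.complex.X (k + 1) ⟶ Y, Q.complex.d (k + 2) (k + 1) ≫ f = 0 →
        ∃ g : Q.complex.X k ⟶ Y, Q.complex.d (k + 1) k ≫ g = f := by
  rw [← ModuleCat.isZero_iff_subsingleton, (Q.isoExt (k + 1) Y).isZero_iff,
    ← HomologicalComplex.exactAt_iff_isZero_homology,
    HomologicalComplex.exactAt_iff' _ k (k + 1) (k + 2) (by simp) (by simp),
    ShortComplex.moduleCat_exact_iff]
  rfl

end ExtComparison

section ProjDim

variable {A : Type u} [CommRing A] {M : ModuleCat.{u} A}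

lemma subsingleton_extGroup_succ_iff {N : ModuleCat.{u} A} {k : ℕ} :
    Subsingleton (extGroup A M N (k + 1)) ↔ Subsingleton (Abelian.Ext.{u} M N (k + 1)) :=
  (subsingleton_derivedExt_succ_iff (projectiveResolution M) k).trans
    (subsingleton_abelianExt_succ_iff (projectiveResolution M) k).symm

lemma projDim_le_natCast_iff {n : ℕ} : projDim A M ≤ n ↔ HasProjectiveDimensionLE M n := by
  constructor
  · intro h
    have hmem : projDim A M ∈ {m : ℕ∞ | ∀ (N : ModuleCat.{u} A) (i : ℕ), m < (i : ℕ∞) →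
        Subsingleton (extGroup A M N i)} := csInf_mem ⟨⊤, by simp⟩
    refine HasProjectiveDimensionLT.mk fun i hi N e => ?_
    obtain ⟨k, rfl⟩ := Nat.exists_eq_add_of_le' (Nat.one_le_of_lt hi)
    have := subsingleton_extGroup_succ_iff.1
      (hmem N (k + 1) (h.trans_lt (by exact_mod_cast hi)))
    exact Subsingleton.elim e 0
  · refine fun _ => sInf_le fun N i hi => ?_
    have hi : n < i := by exact_mod_cast hi
    obtain ⟨k, rfl⟩ := Nat.exists_eq_add_of_le' (Nat.one_le_of_lt hi)
    exact subsingleton_extGroup_succ_iff.2 (HasProjectiveDimensionLT.subsingleton M (n + 1) _ hi N)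

lemma projDim_eq_natCast_add_one_iff {n : ℕ} :
    projDim A M = n + 1 ↔ HasProjectiveDimensionLE M (n + 1) ∧ ¬ HasProjectiveDimensionLE M n := by
  rw [← projDim_le_natCast_iff, ← projDim_le_natCast_iff, not_le, ← ENat.add_one_le_iff (by simp),
    Nat.cast_add_one, le_antisymm_iff]

end ProjDim

section ExtTransfer

variable {C : Type*} [Category* C] [Abelian C] [HasExt.{u} C]

lemma nontrivial_abelianExt_congr {X X' : C} (e : X ≅ X') (Y : C) (k : ℕ) :
    Nontrivial (Abelian.Ext.{u} X Y k) ↔ Nontrivial (Abelian.Ext.{u} X' Y k) :=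
  (((Abelian.extFunctor.{u} k).mapIso e.op).app Y).addCommGroupIsoToAddEquiv.nontrivial_congr.symm

lemma exists_f_comp_eq_of_subsingleton_abelianExt_one {S : ShortComplex C} (hS : S.ShortExact)
    {Y : C} [Subsingleton (Abelian.Ext.{u} S.X₃ Y 1)] (φ : S.X₁ ⟶ Y) :
    ∃ ψ : S.X₂ ⟶ Y, S.f ≫ ψ = φ := by
  obtain ⟨x, hx⟩ := Abelian.Ext.contravariant_sequence_exact₁ hS Y (Abelian.Ext.mk₀ φ)
    (add_zero 1) (Subsingleton.elim _ _)
  obtain ⟨ψ, rfl⟩ := (Abelian.Ext.mk₀_bijective _ _).2 x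
  rw [Abelian.Ext.mk₀_comp_mk₀] at hx
  exact ⟨ψ, (Abelian.Ext.mk₀_bijective _ _).1 hx⟩

end ExtTransfer

section RegularSequence

variable {A : Type*} [CommRing A]

lemma hasProjectiveDimensionLT_quotient_ofList_smul_top (M : ModuleCat.{u} A) (k : ℕ)
    [hM : HasProjectiveDimensionLT M k] {rs : List A} (reg : IsWeaklyRegular M rs) :
    HasProjectiveDimensionLT
      (ModuleCat.of A (M ⧸ Ideal.ofList rs • (⊤ : Submodule A M))) (k + rs.length) := by
  induction rs generalizing M k with
  | nil =>
    rw [Ideal.ofList_nil, Submodule.bot_smul]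
    exact hasProjectiveDimensionLT_of_iso (Submodule.quotEquivOfEqBot ⊥ rfl).toModuleIso.symm k
  | cons r rs ih =>
    rw [isWeaklyRegular_cons_iff] at reg
    have : HasProjectiveDimensionLT (ModuleCat.of A (QuotSMulTop r M)) (k + 1) :=
      reg.1.smulShortComplex_shortExact.hasProjectiveDimensionLT_X₃ k hM
        (hasProjectiveDimensionLT_of_ge M k (k + 1) k.le_succ)
    rw [List.length_cons, ← add_assoc, add_right_comm]
    have := ih (ModuleCat.of A (QuotSMulTop r M)) (k + 1) reg.2
    exact hasProjectiveDimensionLT_of_iso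
      (Submodule.quotOfListConsSMulTopEquivQuotSMulTopInner M r rs).toModuleIso.symm _

variable [Small.{u} A]

lemma nontrivial_abelianExt_quotSMulTop {M N : ModuleCat.{u} A} {x : A} {k : ℕ}
    (reg : IsSMulRegular M x) (hx : x ∈ Module.annihilator A N)
    [Nontrivial (Abelian.Ext.{u} M N k)] :
    Nontrivial (Abelian.Ext.{u} (ModuleCat.of A (QuotSMulTop x M)) N (k + 1)) := by
  have hS := reg.smulShortComplex_shortExact
  obtain ⟨e, he⟩ := exists_ne (0 : Abelian.Ext.{u} M N k)
  have smul_id : x • 𝟙 N = 0 := by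
    ext y
    exact Module.mem_annihilator.1 hx y
  have mk₀_smul_id_comp (y : Abelian.Ext.{u} M N k) :
      (Abelian.Ext.mk₀ (x • 𝟙 M)).comp y (zero_add k) = 0 := by
    rw [Abelian.Ext.mk₀_smul, Abelian.Ext.smul_comp, Abelian.Ext.mk₀_id_comp,
      Abelian.Ext.smul_eq_comp_mk₀, smul_id, Abelian.Ext.mk₀_zero, Abelian.Ext.comp_zero]
  refine nontrivial_of_ne (hS.extClass.comp e (add_comm 1 k)) 0 fun h => he ?_
  obtain ⟨y, rfl⟩ := Abelian.Ext.contravariant_sequence_exact₁ hS N e (add_comm 1 k) h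
  exact mk₀_smul_id_comp y

lemma nontrivial_abelianExt_quotient_ofList_smul_top {N : ModuleCat.{u} A} {rs : List A}
    (hN : ∀ r ∈ rs, r ∈ Module.annihilator A N) (M : ModuleCat.{u} A) (k : ℕ)
    [hM : Nontrivial (Abelian.Ext.{u} M N k)] (reg : IsWeaklyRegular M rs) :
    Nontrivial (Abelian.Ext.{u}
      (ModuleCat.of A (M ⧸ Ideal.ofList rs • (⊤ : Submodule A M))) N (k + rs.length)) := by
  induction rs generalizing M k with
  | nil =>
    rw [Ideal.ofList_nil, Submodule.bot_smul]
    exact (nontrivial_abelianExt_congr (Submodule.quotEquivOfEqBot ⊥ rfl).toModuleIso N k).2 hM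
  | cons r rs ih =>
    rw [List.forall_mem_cons] at hN
    rw [isWeaklyRegular_cons_iff] at reg
    have := nontrivial_abelianExt_quotSMulTop reg.1 hN.1 (k := k)
    rw [List.length_cons, ← add_assoc, add_right_comm, nontrivial_abelianExt_congr
      (Submodule.quotOfListConsSMulTopEquivQuotSMulTopInner M r rs).toModuleIso]
    exact ih hN.2 (ModuleCat.of A (QuotSMulTop r M)) (k + 1) reg.2

end RegularSequence

section AdjoinRoot

variable {A : Type u} [CommRing A]

/-- The complex `0 → A[X] → A[X] → A[X]/(f) → 0` of `A`-modules whose first map is multiplication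
by `f`; a free resolution of `AdjoinRoot f` when `f` is a nonzerodivisor. -/
noncomputable def adjoinRootShortComplex (f : A[X]) : ShortComplex (ModuleCat.{u} A) :=
  ShortComplex.mk (ModuleCat.ofHom (LinearMap.mulLeft A f))
    (ModuleCat.ofHom (AdjoinRoot.mkₐ f (R := A)).toLinearMap) (by
      ext p
      simp)

lemma adjoinRootShortComplex_shortExact {f : A[X]} (hf : f ∈ A[X]⁰) :
    (adjoinRootShortComplex f).ShortExact where
  exact := (ShortComplex.moduleCat_exact_iff _).2 fun _ hp =>
    let ⟨q, hq⟩ := AdjoinRoot.mk_eq_zero.1 hp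
    ⟨q, hq.symm⟩
  mono_f := (ModuleCat.mono_iff_injective _).2 fun _ _ =>
    (mul_cancel_left_mem_nonZeroDivisors hf).1
  epi_g := (ModuleCat.epi_iff_surjective _).2 AdjoinRoot.mk_surjective

lemma hasProjectiveDimensionLE_one_adjoinRoot {f : A[X]} (hf : f ∈ A[X]⁰) :
    HasProjectiveDimensionLE (ModuleCat.of A (AdjoinRoot f)) 1 :=
  have : HasProjectiveDimensionLT (ModuleCat.of A A[X]) 1 := inferInstance
  (adjoinRootShortComplex_shortExact hf).hasProjectiveDimensionLT_X₃ 1 this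
    (hasProjectiveDimensionLT_of_ge (ModuleCat.of A A[X]) 1 2 one_le_two)

lemma exists_linearMap_mul_eq_of_subsingleton_abelianExt_one {f : A[X]} (hf : f ∈ A[X]⁰)
    {N : ModuleCat.{u} A} [h : Subsingleton (Abelian.Ext.{u} (ModuleCat.of A (AdjoinRoot f)) N 1)]
    (φ : A[X] →ₗ[A] N) : ∃ ψ : A[X] →ₗ[A] N, ∀ p, ψ (f * p) = φ p := by
  have : Subsingleton (Abelian.Ext.{u} (adjoinRootShortComplex f).X₃ N 1) := h
  obtain ⟨ψ, hψ⟩ := exists_f_comp_eq_of_subsingleton_abelianExt_one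
    (adjoinRootShortComplex_shortExact hf) (ModuleCat.ofHom φ)
  exact ⟨ψ.hom, fun p => congrArg (fun g => g.hom p) hψ⟩

end AdjoinRoot

section LocalizationAway

lemma C_mul_X_sub_one_mem_nonZeroDivisors {A : Type*} [CommRing A] (s : A) :
    C s * X - 1 ∈ A[X]⁰ :=
  mem_nonzeroDivisors_of_coeff_mem 0 (by simpa using isUnit_one.neg.mem_nonZeroDivisors)

variable {A : Type u} [CommRing A]

/-- The isomorphism `A[X]/(sX - 1) ≅ A_s` of `A`-modules, for any model `S` of `A_s`. -/
noncomputable def adjoinRootIsoAway (s : A) (S : Type u) [CommRing S] [Algebra A S]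
    [IsLocalization.Away s S] :
    ModuleCat.of A (AdjoinRoot (C s * X - 1)) ≅ ModuleCat.of A S :=
  ((Localization.awayEquivAdjoin s).symm.trans
    (IsLocalization.algEquiv (Submonoid.powers s) _ S)).toLinearEquiv.toModuleIso

lemma hasProjectiveDimensionLE_one_away (s : A) (S : Type u) [CommRing S] [Algebra A S]
    [IsLocalization.Away s S] :
    HasProjectiveDimensionLE (ModuleCat.of A S) 1 :=
  have := hasProjectiveDimensionLE_one_adjoinRoot (C_mul_X_sub_one_mem_nonZeroDivisors s)
  hasProjectiveDimensionLT_of_iso (adjoinRootIsoAway s S) 2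

lemma exists_smul_succ_sub_eq_of_subsingleton_abelianExt_away_one (s : A) (S : Type u)
    [CommRing S] [Algebra A S] [IsLocalization.Away s S] {N : ModuleCat.{u} A}
    [h : Subsingleton (Abelian.Ext.{u} (ModuleCat.of A S) N 1)] (g : ℕ → N) :
    ∃ f : ℕ → N, ∀ k, s • f (k + 1) - f k = g k := by
  rw [← not_nontrivial_iff_subsingleton, ← nontrivial_abelianExt_congr (adjoinRootIsoAway s S),
    not_nontrivial_iff_subsingleton] at h
  obtain ⟨ψ, hψ⟩ := exists_linearMap_mul_eq_of_subsingleton_abelianExt_one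
    (C_mul_X_sub_one_mem_nonZeroDivisors s) ((basisMonomials A).constr A g)
  refine ⟨fun k => ψ (X ^ k), fun k => ?_⟩
  calc s • ψ (X ^ (k + 1)) - ψ (X ^ k) = ψ ((C s * X - 1) * X ^ k) := by
        rw [← map_smul, ← map_sub, smul_eq_C_mul, sub_mul, one_mul, mul_assoc, pow_succ']
    _ = (basisMonomials A).constr A g (basisMonomials A k) := by
        rw [hψ, coe_basisMonomials, ← monomial_one_right_eq_X_pow]
    _ = g k := (basisMonomials A).constr_basis A g k

end LocalizationAway

section Telescope

variable {B : Type*} [CommRing B]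

lemma exists_pow_succ_dvd_pow_of_C_mul_succ_sub_eq_X_pow {t : B} {f : ℕ → B[X]}
    (hf : ∀ k, C t * f (k + 1) - f k = X ^ k) : ∃ m, t ^ (m + 1) ∣ t ^ m := by
  have coeff_hf (k m : ℕ) :
      t * (f (k + 1)).coeff m - (f k).coeff m = if m = k then 1 else 0 := by
    rw [← coeff_C_mul, ← coeff_sub, hf, coeff_X_pow]
  have coeff_zero_eq {k m : ℕ} (hk : k ≤ m) : (f 0).coeff m = t ^ k * (f k).coeff m := by
    induction k with
    | zero => simp
    | succ k ih =>
      have := coeff_hf k m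
      rw [if_neg (by omega), sub_eq_zero] at this
      rw [ih (by omega), ← this, pow_succ, mul_assoc]
  let m := (f 0).natDegree + 1
  have pow_mul_coeff_eq_zero : t ^ m * (f m).coeff m = 0 := by
    rw [← coeff_zero_eq le_rfl, coeff_natDegree_succ_eq_zero]
  refine ⟨m, (f (m + 1)).coeff m, ?_⟩
  calc t ^ m = t ^ m * (t * (f (m + 1)).coeff m - (f m).coeff m) := by
        rw [coeff_hf, if_pos rfl, mul_one]
    _ = t ^ (m + 1) * (f (m + 1)).coeff m := by
        rw [mul_sub, pow_mul_coeff_eq_zero, sub_zero, pow_succ t m, mul_assoc]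

end Telescope

section QuotientPolynomial

variable {A : Type u} [CommRing A] {s : A}

lemma nontrivial_abelianExt_away_polynomial_one {B : Type u} [CommRing B] [Algebra A B]
    (hs : ∀ m, ¬ algebraMap A B s ^ (m + 1) ∣ algebraMap A B s ^ m)
    (S : Type u) [CommRing S] [Algebra A S] [IsLocalization.Away s S] :
    Nontrivial (Abelian.Ext.{u} (ModuleCat.of A S) (ModuleCat.of A B[X]) 1) := by
  by_contra h
  rw [not_nontrivial_iff_subsingleton] at h
  obtain ⟨f, hf⟩ := exists_smul_succ_sub_eq_of_subsingleton_abelianExt_away_one s S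
    (N := ModuleCat.of A B[X]) fun k => (X ^ k : B[X])
  have smul_eq (p : B[X]) : s • p = C (algebraMap A B s) * p := by
    rw [← smul_eq_C_mul, algebraMap_smul]
  obtain ⟨m, hm⟩ := exists_pow_succ_dvd_pow_of_C_mul_succ_sub_eq_X_pow (f := f)
    fun k => smul_eq (f (k + 1)) ▸ hf k
  exact hs m hm

variable {I : Ideal A}

lemma mem_annihilator_quotient_polynomial {a : A} (ha : a ∈ I) :
    a ∈ Module.annihilator A (A ⧸ I)[X] :=
  Module.mem_annihilator.2 fun p => by
    rw [← algebraMap_smul (A ⧸ I) a p, Ideal.Quotient.algebraMap_eq,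
      Ideal.Quotient.eq_zero_iff_mem.2 ha, zero_smul]

lemma mem_sup_span_singleton_iff_mk_dvd_mk {x y : A} :
    x ∈ I ⊔ Ideal.span {y} ↔ Ideal.Quotient.mk I y ∣ Ideal.Quotient.mk I x := by
  rw [sup_comm, ← Ideal.mem_quotient_iff_mem_sup, Ideal.map_span, Set.image_singleton,
    Ideal.mem_span_singleton]

lemma pow_notMem_sup_span_pow_succ (hI : I.IsPrime) (hs : s ∉ I)
    (hIs : I ⊔ Ideal.span {s} ≠ ⊤) (m : ℕ) : s ^ m ∉ I ⊔ Ideal.span {s ^ (m + 1)} := by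
  rw [Ideal.ne_top_iff_one] at hIs
  rw [mem_sup_span_singleton_iff_mk_dvd_mk] at hIs ⊢
  have : IsDomain (A ⧸ I) := Ideal.Quotient.isDomain I
  have mk_pow_ne_zero : Ideal.Quotient.mk I s ^ m ≠ 0 :=
    pow_ne_zero m (mt Ideal.Quotient.eq_zero_iff_mem.1 hs)
  rintro ⟨c, hc⟩
  rw [map_pow, map_pow, pow_succ, mul_assoc] at hc
  have mk_mul_eq_one : Ideal.Quotient.mk I s * c = 1 := (mul_eq_left₀ mk_pow_ne_zero).1 hc.symm
  exact hIs ⟨c, by rw [map_one, mk_mul_eq_one]⟩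

end QuotientPolynomial

lemma ofList_ofFn_smul_top_eq_restrictScalars_span {A S : Type*} [CommRing A] [CommRing S]
    [Algebra A S] {n : ℕ} (a : Fin n → A) :
    Ideal.ofList (List.ofFn a) • (⊤ : Submodule A S) =
      (Ideal.span (Set.range fun i => algebraMap A S (a i))).restrictScalars A := by
  rw [Ideal.smul_top_eq_map, Ideal.ofList, Ideal.map_span]
  congr 2
  ext x
  simp [List.mem_ofFn]

/-- The condition on `s` says that the localization map `A/I → (A/I)_s` is not surjective. -/
theorem projDim_quotient_localizationAway_eq_general
    (A : Type u) [CommRing A] (I : Ideal A) (s : A)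
    (hs : ∀ m, s ^ m ∉ I ⊔ Ideal.span {s ^ (m + 1)})
    (S : Type u) [CommRing S] [Algebra A S] [IsLocalization.Away s S]
    (n : ℕ) (a : Fin n → A) (ha : ∀ i, a i ∈ I)
    (hreg : IsWeaklyRegular S (List.ofFn fun i => algebraMap A S (a i))) :
    projDim A (ModuleCat.of A (S ⧸ Ideal.span (Set.range fun i => algebraMap A S (a i)))) =
      (n : ℕ∞) + 1 := by
  let M := ModuleCat.of A S
  let e : ModuleCat.of A (M ⧸ Ideal.ofList (List.ofFn a) • (⊤ : Submodule A M)) ≅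
      ModuleCat.of A (S ⧸ Ideal.span (Set.range fun i => algebraMap A S (a i))) :=
    (Submodule.quotEquivOfEq _ _ (ofList_ofFn_smul_top_eq_restrictScalars_span a) ≪≫ₗ
      Submodule.Quotient.restrictScalarsEquiv A _).toModuleIso
  have reg : IsWeaklyRegular M (List.ofFn a) := by
    rwa [← isWeaklyRegular_map_algebraMap_iff S, List.map_ofFn]
  have ann : ∀ r ∈ List.ofFn a, r ∈ Module.annihilator A (A ⧸ I)[X] :=
    List.forall_mem_ofFn_iff.2 fun i => mem_annihilator_quotient_polynomial (ha i)
  have : HasProjectiveDimensionLT M 2 := hasProjectiveDimensionLE_one_away s S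
  have upper := hasProjectiveDimensionLT_quotient_ofList_smul_top M 2 reg
  have : Nontrivial (Abelian.Ext.{u} M (ModuleCat.of A (A ⧸ I)[X]) 1) :=
    nontrivial_abelianExt_away_polynomial_one (s := s) (fun m => by
      simpa [mem_sup_span_singleton_iff_mk_dvd_mk] using hs m) S
  have lower := nontrivial_abelianExt_quotient_ofList_smul_top
    (N := ModuleCat.of A (A ⧸ I)[X]) ann M 1 reg
  rw [List.length_ofFn, add_comm] at upper lower
  rw [nontrivial_abelianExt_congr e, ← not_subsingleton_iff_nontrivial] at lower
  exact projDim_eq_natCast_add_one_iff.2 ⟨hasProjectiveDimensionLT_of_iso e (n + 2),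
    fun h => lower (h.subsingleton _ _ _ le_rfl _)⟩

theorem projDim_quotient_localizationAway_eq
    (A : Type u) [CommRing A] [IsNoetherianRing A]
    (P : Ideal A) (hP : P.IsPrime) (s : A) (hs : s ∉ P)
    (hPs : P ⊔ Ideal.span {s} ≠ ⊤)
    (n : ℕ) (a : Fin n → A) (ha : ∀ i, a i ∈ P)
    (hreg : RingTheory.Sequence.IsRegular (Localization.Away s)
      (List.ofFn fun i => algebraMap A (Localization.Away s) (a i))) :
    projDim A (ModuleCat.of A
      (Localization.Away s ⧸
        Ideal.span (Set.range fun i => algebraMap A (Localization.Away s) (a i)))) =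
      (n : ℕ∞) + 1 :=
  projDim_quotient_localizationAway_eq_general A P s (pow_notMem_sup_span_pow_succ hP hs hPs)
    (Localization.Away s) n a ha hreg.toIsWeaklyRegular
end

section
/- Let A be a commutative noetherian ring of finite Krull dimension d, and let M be a cochain complex of A-modules with bounded nonzero cohomology which is quasi-isomorphic to a bounded complex of flat A-modules. Set inf(M) = inf{ j : H^j(M) ≠ 0 }. Then for every A-module N and every integer k > d − inf(M), one has Hom_{D(A)}(M, N[k]) = 0; that is, the projective dimension of M in the derived category satisfies projdim_A(M) ≤ d − inf(M). -/
/-!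
STATEMENT 5: Let A be a commutative noetherian ring of finite Krull dimension d, and let
M be a cochain complex of A-modules with bounded nonzero cohomology which is
quasi-isomorphic to a bounded complex of flat A-modules.  With i = inf(M)
(= inf{ j : H^j(M) ≠ 0 }), for every A-module N and every integer k > d − i one has
Hom_{D(A)}(M, N[k]) = 0; that is, projdim_A(M) ≤ d − inf(M) in the derived category.
-/

open CategoryTheory Limits

universe u

/-!
Truncating the flat complex `F` below `i = inf(M)` leaves a bounded complex of flat modules together
with one module, the `i`-th opcycles, of finite flat dimension. So it is enough that
`Ext^r(C, N) = 0` for `r > d` whenever `C` has finite flat dimension.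

Let `S j` be the `j`-th syzygy of `C` in a free resolution. By the Auslander-Buchsbaum argument,
`S j` is flat at every prime of height at most `j`; in particular `S d` is flat, and by dimension
shifting it remains to see that `Ext^r(S d, N) = 0` for `r > 0`. Let `J` be an injective resolution
of `A`, let `V j` be the set of primes of height at least `j`, and let `Γ_W J` be the subcomplex
supported in `W`. One shows by induction on `j` that `Ext^r((J / Γ_{V (j + 1)} J) ⊗ S j, N) = 0` for
`r > max(0, d - j)`; as `V (d + 1)` is empty and `J ⊗ S d ≅ S d`, the case `j = d` is the claim.

* The graded piece of `J` at a prime `q` is local at `q` and `q`-power torsion, so if `S` is flat at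
  `q`, then tensoring the piece with `S` gives a direct sum of copies of it.
* Each localization `A_x` has projective dimension at most one, so `Γ_{V(I)} J` inherits from
  `J ≅ A` that its `Ext^r` vanishes for `r > 0`. By descending induction on `m`, the `Ext^r` of the
  piece at a prime of height at least `m` then vanishes for `r > d - m`.
* In the inductive step, a map out of `(J / Γ_{V (j + 2)} J) ⊗ S (j + 1)` factors through
  `(J / Γ_{V (j + 1)} J) ⊗ S (j + 1)`, hence extends to `(J / Γ_{V (j + 1)} J) ⊗ F j`, and so comes
  from a map out of `(J / Γ_{V (j + 2)} J) ⊗ F j`, which is zero.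
-/

open Function TensorProduct

namespace FlatKrull

/-! ### Syzygies of modules of finite flat dimension -/

section Tensor

variable {R : Type*} [CommRing R] {S F F' G' G'' G : Type*}
  [AddCommGroup S] [AddCommGroup F] [AddCommGroup F'] [AddCommGroup G'] [AddCommGroup G'']
  [AddCommGroup G] [Module R S] [Module R F] [Module R F'] [Module R G'] [Module R G''] [Module R G]

lemma rTensor_lTensor_comm (i : G' →ₗ[R] G'') (f : S →ₗ[R] F) (x : G' ⊗[R] S) :
    i.rTensor F (f.lTensor G' x) = f.lTensor G'' (i.rTensor S x) := by
  rw [← LinearMap.comp_apply, ← LinearMap.comp_apply, LinearMap.rTensor_comp_lTensor,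
    LinearMap.lTensor_comp_rTensor]

lemma lTensor_injective_of_extension {f : S →ₗ[R] F} {i : G' →ₗ[R] G''} {p : G'' →ₗ[R] G}
    (hip : Exact i p) (hp : Surjective p) (hi : Injective (i.rTensor F))
    (h' : Injective (f.lTensor G')) (h : Injective (f.lTensor G)) :
    Injective (f.lTensor G'') := by
  rw [injective_iff_map_eq_zero]
  intro x hx
  have hpx : p.rTensor S x = 0 := h (by rw [map_zero, ← rTensor_lTensor_comm, hx, map_zero])
  obtain ⟨z, rfl⟩ := (rTensor_exact _ hip hp _).1 hpx
  rw [← rTensor_lTensor_comm] at hx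
  rw [(map_eq_zero_iff _ h').1 ((map_eq_zero_iff _ hi).1 hx), map_zero]

lemma lTensor_injective_of_injective [Module.Flat R S] {f : S →ₗ[R] F} {i : G' →ₗ[R] G''}
    (hi : Injective i) (h : Injective (f.lTensor G'')) : Injective (f.lTensor G') := by
  refine Injective.of_comp (f := i.rTensor F) ?_
  have hcomm : i.rTensor F ∘ f.lTensor G' = f.lTensor G'' ∘ i.rTensor S :=
    funext (rTensor_lTensor_comm i f)
  rw [hcomm]
  exact h.comp (Module.Flat.rTensor_preserves_injective_linearMap i hi)

lemma lTensor_injective_congr {f : S →ₗ[R] F} (e : G ≃ₗ[R] G')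
    (h : Injective (f.lTensor G)) : Injective (f.lTensor G') := by
  have hcomm : f.lTensor G' ∘ e.rTensor S = e.rTensor F ∘ f.lTensor G :=
    funext fun x => (rTensor_lTensor_comm e.toLinearMap f x).symm
  refine Injective.of_comp_right ?_ (e.rTensor S).surjective
  rw [hcomm]
  exact (e.rTensor F).injective.comp h

lemma flat_left_of_exact {f : S →ₗ[R] F} {g : F →ₗ[R] F'} (hf : Injective f) (hfg : Exact f g)
    (hg : Surjective g) [Module.Flat R F'] [Module.Flat R F] : Module.Flat R S := by
  rw [Module.Flat.iff_rTensor_injective']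
  intro I
  refine Injective.of_comp (f := f.lTensor R) ?_
  have hcomm : f.lTensor R ∘ I.subtype.rTensor S = I.subtype.rTensor F ∘ f.lTensor I :=
    funext fun x => (rTensor_lTensor_comm I.subtype f x).symm
  rw [hcomm]
  exact (Module.Flat.rTensor_preserves_injective_linearMap _ I.injective_subtype).comp
    (LinearMap.lTensor_injective_of_exact_of_flat g hg f hf hfg I)

lemma lTensor_quotient_injective_iff (I : Ideal R) (f : S →ₗ[R] F) :
    Injective (f.lTensor (R ⧸ I)) ↔
      ∀ y, f y ∈ I • (⊤ : Submodule R F) → y ∈ I • (⊤ : Submodule R S) := by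
  have hf (y : S) : quotTensorEquivQuotSMul F I (f.lTensor (R ⧸ I)
      ((quotTensorEquivQuotSMul S I).symm (Submodule.Quotient.mk y))) =
      Submodule.Quotient.mk (f y) := by simp
  rw [injective_iff_map_eq_zero, ← (quotTensorEquivQuotSMul S I).symm.forall_congr_right]
  refine (Submodule.Quotient.mk_surjective _).forall.trans (forall_congr' fun y => ?_)
  change _ = 0 → (quotTensorEquivQuotSMul S I).symm (Submodule.Quotient.mk y) = 0 ↔ _
  rw [← (quotTensorEquivQuotSMul F I).map_eq_zero_iff]
  erw [hf]
  rw [LinearEquiv.map_eq_zero_iff, Submodule.Quotient.mk_eq_zero, Submodule.Quotient.mk_eq_zero]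

lemma lTensor_injective_of_baseChange {R' : Type*} [CommRing R'] [Algebra R R'] [Module R' G]
    [IsScalarTower R R' G] {f : S →ₗ[R] F} (h : Injective ((f.baseChange R').lTensor G)) :
    Injective (f.lTensor G) := by
  let eS := AlgebraTensorModule.cancelBaseChange R R' R' G S
  let eF := AlgebraTensorModule.cancelBaseChange R R' R' G F
  have hcomm : ⇑(f.lTensor G) ∘ eS = eF ∘ (f.baseChange R').lTensor G := by
    ext x
    induction x with
    | zero => simp
    | add x y hx hy => simpa using congr($hx + $hy)
    | tmul a x =>
      induction x with
      | zero => simp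
      | add x y hx hy => simpa [tmul_add] using congr($hx + $hy)
      | tmul r s => simp [eS, eF]
  refine Injective.of_comp_right ?_ eS.surjective
  rw [hcomm]
  exact eF.injective.comp h

lemma lTensor_mk_localization_injective (M : Submonoid R)
    (h : ∀ s ∈ M, IsSMulRegular (G ⊗[R] S) s) :
    Injective ((TensorProduct.mk R (Localization M) S 1).lTensor G) := by
  have hcomm : (TensorProduct.leftComm R G (Localization M) S).toLinearMap ∘ₗ
      (TensorProduct.mk R (Localization M) S 1).lTensor G =
        TensorProduct.mk R (Localization M) (G ⊗[R] S) 1 := by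
    ext a b; simp
  rw [injective_iff_map_eq_zero]
  intro x hx
  obtain ⟨s, hs⟩ := (IsLocalizedModule.eq_zero_iff M
    (TensorProduct.mk R (Localization M) (G ⊗[R] S) 1)).1
    (by rw [← hcomm, LinearMap.comp_apply, hx, map_zero])
  exact (h s s.2).right_eq_zero_of_smul hs

lemma lTensor_injective_of_flat_localization (M : Submonoid R) {f : S →ₗ[R] F} {g : F →ₗ[R] F'}
    (hf : Injective f) (hfg : Exact f g) (hg : Surjective g)
    [Module.Flat (Localization M) (Localization M ⊗[R] F')]
    (hreg : ∀ s ∈ M, IsSMulRegular (G ⊗[R] S) s) : Injective (f.lTensor G) := by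
  have : Module.Flat R (Localization M ⊗[R] F') := .trans R (Localization M) _
  have hloc : Injective ((f.lTensor (Localization M)).lTensor G) :=
    LinearMap.lTensor_injective_of_exact_of_flat (g.lTensor _) (LinearMap.lTensor_surjective _ hg)
      _ (Module.Flat.lTensor_preserves_injective_linearMap _ hf) (lTensor_exact _ hfg hg) G
  have hcomm : (TensorProduct.mk R (Localization M) F 1).lTensor G ∘ₗ f.lTensor G =
      (f.lTensor (Localization M)).lTensor G ∘ₗ
        (TensorProduct.mk R (Localization M) S 1).lTensor G := by
    ext a b; simp
  refine Injective.of_comp (f := (TensorProduct.mk R (Localization M) F 1).lTensor G) ?_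
  rw [← LinearMap.coe_comp, hcomm]
  exact hloc.comp (lTensor_mk_localization_injective M hreg)

end Tensor

lemma flat_of_lTensor_quotient_prime_injective {R S F F' : Type u} [CommRing R]
    [IsNoetherianRing R] [AddCommGroup S] [AddCommGroup F] [AddCommGroup F'] [Module R S]
    [Module R F] [Module R F'] [Module.Flat R F] {f : S →ₗ[R] F} {g : F →ₗ[R] F'}
    (hfg : Exact f g) (hg : Surjective g)
    (h : ∀ p : PrimeSpectrum R, Injective (f.lTensor (R ⧸ p.asIdeal))) : Module.Flat R F' := by
  have hfin (M : Type u) [AddCommGroup M] [Module R M] (hM : Module.Finite R M) :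
      Injective (f.lTensor M) := by
    induction hM using IsNoetherianRing.induction_on_isQuotientEquivQuotientPrime R with
    | subsingleton N => exact injective_of_subsingleton _
    | quotient N p e => exact lTensor_injective_congr e.symm (h p)
    | exact N₁ N₂ N₃ i p hi hp hip h₁ h₃ =>
      exact lTensor_injective_of_extension hip hp
        (Module.Flat.rTensor_preserves_injective_linearMap _ hi) h₁ h₃
  rw [Module.Flat.iff_rTensor_injective']
  intro I
  rw [← LinearMap.lTensor_inj_iff_rTensor_inj]
  refine lTensor_injective_of_exact_of_exact_of_rTensor_injective hfg hg
    (LinearMap.exact_subtype_mkQ I) I.mkQ_surjective ?_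
    (Module.Flat.lTensor_preserves_injective_linearMap _ I.injective_subtype)
  rw [← LinearMap.lTensor_inj_iff_rTensor_inj]
  exact hfin (R ⧸ I) inferInstance

/-- A system of short exact sequences `0 → S (j + 1) → F j → S j → 0` with `F j` flat. It plays the
role of a flat resolution of `S 0`, whose `j`-th syzygy is `S j`. -/
structure IsFlatSyzygySeq (R : Type*) [CommRing R] {S F : ℕ → Type*} [∀ j, AddCommGroup (S j)]
    [∀ j, AddCommGroup (F j)] [∀ j, Module R (S j)] [∀ j, Module R (F j)]
    (f : ∀ j, S (j + 1) →ₗ[R] F j) (g : ∀ j, F j →ₗ[R] S j) : Prop where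
  injective : ∀ j, Injective (f j)
  exact : ∀ j, Exact (f j) (g j)
  surjective : ∀ j, Surjective (g j)
  flat : ∀ j, Module.Flat R (F j)

namespace IsFlatSyzygySeq

section

variable {R : Type*} [CommRing R] {S F : ℕ → Type*} [∀ j, AddCommGroup (S j)]
  [∀ j, AddCommGroup (F j)] [∀ j, Module R (S j)] [∀ j, Module R (F j)]
  {f : ∀ j, S (j + 1) →ₗ[R] F j} {g : ∀ j, F j →ₗ[R] S j}

lemma baseChange (h : IsFlatSyzygySeq R f g) (R' : Type*) [CommRing R'] [Algebra R R']
    [Module.Flat R R'] :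
    IsFlatSyzygySeq R' (fun j => (f j).baseChange R') (fun j => (g j).baseChange R') where
  injective j := Module.Flat.lTensor_preserves_injective_linearMap (f j) (h.injective j)
  exact j := lTensor_exact R' (h.exact j) (h.surjective j)
  surjective j := LinearMap.lTensor_surjective R' (h.surjective j)
  flat j := have := h.flat j; inferInstance

lemma isSMulRegular (h : IsFlatSyzygySeq R f g) {x : R} (hx : x ∈ nonZeroDivisors R) (j : ℕ) :
    IsSMulRegular (S (j + 1)) x :=
  have := h.flat j
  (Module.Flat.isSMulRegular_of_nonZeroDivisors hx).of_injective (f j) (h.injective j)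

lemma quotient_span_singleton (h : IsFlatSyzygySeq R f g) {x : R} (hx : x ∈ nonZeroDivisors R) :
    IsFlatSyzygySeq (R ⧸ Ideal.span {x}) (fun j => (f (j + 1)).baseChange (R ⧸ Ideal.span {x}))
      (fun j => (g (j + 1)).baseChange (R ⧸ Ideal.span {x})) where
  injective j := by
    refine (lTensor_quotient_injective_iff _ (f (j + 1))).2 fun y hy => ?_
    simp only [Submodule.ideal_span_singleton_smul, Submodule.mem_smul_pointwise_iff_exists,
      Submodule.mem_top, true_and] at hy ⊢
    obtain ⟨z, hz⟩ := hy
    have hgz : g (j + 1) z = 0 := by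
      refine (h.isSMulRegular hx j).right_eq_zero_of_smul ?_
      rw [← map_smul, hz]
      exact (h.exact _).apply_apply_eq_zero y
    obtain ⟨w, rfl⟩ := (h.exact _ _).1 hgz
    exact ⟨w, h.injective _ (by rw [map_smul, hz])⟩
  exact j := lTensor_exact _ (h.exact _) (h.surjective _)
  surjective j := LinearMap.lTensor_surjective _ (h.surjective _)
  flat j := have := h.flat (j + 1); inferInstance

lemma flat_of_le (h : IsFlatSyzygySeq R f g) {n m : ℕ} (hn : Module.Flat R (S n)) (hm : n ≤ m) :
    Module.Flat R (S m) := by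
  induction m, hm using Nat.le_induction with
  | base => exact hn
  | succ m _ ih =>
    have := h.flat m
    exact flat_left_of_exact (h.injective m) (h.exact m) (h.surjective m)

end

end IsFlatSyzygySeq

open IsLocalRing

lemma exists_injective_residueField_or_regular (R : Type*) [CommRing R] [IsNoetherianRing R]
    [IsLocalRing R] :
    (∃ φ : ResidueField R →ₗ[R] R, Injective φ) ∨ ∃ x ∈ maximalIdeal R, x ∈ nonZeroDivisors R := by
  refine or_iff_not_imp_right.2 fun h => ?_
  push Not at h
  have hsub : (maximalIdeal R : Set R) ⊆ ⋃ p ∈ associatedPrimes R R, (p : Set R) := by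
    rw [biUnion_associatedPrimes_eq_compl_nonZeroDivisors]
    exact h
  obtain ⟨p, hp, hle⟩ := (Ideal.subset_union_prime_finite (associatedPrimes.finite R R) ⊥ ⊥
    fun p hp _ _ => hp.isPrime).1 hsub
  obtain rfl := (maximalIdeal.isMaximal R).eq_of_le hp.isPrime.ne_top hle
  exact (isAssociatedPrime_iff_exists_injective_linearMap _ _).1 hp |>.2

lemma residueField_map_mk_bijective {R : Type*} [CommRing R] [IsLocalRing R] (I : Ideal R)
    [IsLocalRing (R ⧸ I)] [IsLocalHom (Ideal.Quotient.mk I)] :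
    Bijective (ResidueField.map (Ideal.Quotient.mk I)) := by
  refine ⟨RingHom.injective _, Surjective.of_comp (g := residue R) ?_⟩
  rw [← RingHom.coe_comp, ResidueField.map_comp_residue]
  exact residue_surjective.comp Ideal.Quotient.mk_surjective

/-- Passing to a quotient of a local ring does not change its residue field. -/
noncomputable def residueFieldQuotientEquiv {R : Type*} [CommRing R] [IsLocalRing R] (I : Ideal R)
    [IsLocalRing (R ⧸ I)] [IsLocalHom (Ideal.Quotient.mk I)] :
    ResidueField (R ⧸ I) ≃ₗ[R] ResidueField R :=
  (LinearEquiv.ofBijective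
    (AlgHom.mk (R := R) (ResidueField.map (Ideal.Quotient.mk I)) fun _ => rfl).toLinearMap
    (residueField_map_mk_bijective I)).symm

lemma isSMulRegular_quotient_of_mem_primeCompl {R : Type*} [CommRing R] (p : Ideal R) [p.IsPrime]
    {s : R} (hs : s ∈ p.primeCompl) : IsSMulRegular (R ⧸ p) s := by
  have hs' : Ideal.Quotient.mk p s ≠ 0 := Ideal.Quotient.eq_zero_iff_mem.not.2 hs
  exact fun a b hab => mul_left_cancel₀ hs' hab

namespace IsFlatSyzygySeq

variable {R : Type u} [CommRing R] [IsNoetherianRing R] {S F : ℕ → Type u}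
  [∀ j, AddCommGroup (S j)] [∀ j, AddCommGroup (F j)] [∀ j, Module R (S j)] [∀ j, Module R (F j)]
  {f : ∀ j, S (j + 1) →ₗ[R] F j} {g : ∀ j, F j →ₗ[R] S j}

lemma lTensor_residueField_injective [IsLocalRing R] (h : IsFlatSyzygySeq R f g) {j : ℕ}
    (hdim : ringKrullDim R ≤ j) (hflat : Module.Flat R (S (j + 1))) :
    Injective ((f j).lTensor (ResidueField R)) := by
  induction j using Nat.strong_induction_on generalizing R S F with | _ j ih
  obtain ⟨φ, hφ⟩ | ⟨x, hxm, hx⟩ := exists_injective_residueField_or_regular R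
  · refine lTensor_injective_of_injective hφ ?_
    exact Module.Flat.lTensor_preserves_injective_linearMap (f j) (h.injective j)
  have hnt : Nontrivial (R ⧸ Ideal.span {x}) := Ideal.Quotient.nontrivial_iff.2 fun htop =>
    hxm (Ideal.span_singleton_eq_top.1 htop)
  have : IsLocalRing (R ⧸ Ideal.span {x}) :=
    .of_surjective' (Ideal.Quotient.mk _) Ideal.Quotient.mk_surjective
  have : IsLocalHom (Ideal.Quotient.mk (Ideal.span {x})) :=
    .of_surjective _ Ideal.Quotient.mk_surjective
  have hdim' := (ringKrullDim_quotient_succ_le_of_nonZeroDivisor hx).trans hdim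
  cases j with
  | zero =>
    have := ringKrullDim_nonneg_of_nontrivial (R := R ⧸ Ideal.span {x})
    exact absurd ((add_le_add_left this 1).trans hdim') (by simp)
  | succ j =>
    rw [Nat.cast_add, Nat.cast_one, ENat.WithBot.add_le_add_one_right_iff] at hdim'
    have hres := ih j j.lt_succ_self (h.quotient_span_singleton hx) hdim' inferInstance
    exact lTensor_injective_congr (residueFieldQuotientEquiv (Ideal.span {x}))
      (lTensor_injective_of_baseChange hres)

lemma flat_of_flat_succ [IsLocalRing R] (h : IsFlatSyzygySeq R f g) {j : ℕ}
    (hdim : ringKrullDim R ≤ j) (hflat : Module.Flat R (S (j + 1)))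
    (hloc : ∀ p : Ideal R, ∀ _ : p.IsPrime, p < maximalIdeal R →
      Module.Flat (Localization.AtPrime p) (Localization.AtPrime p ⊗[R] S j)) :
    Module.Flat R (S j) := by
  have := h.flat j
  refine flat_of_lTensor_quotient_prime_injective (h.exact j) (h.surjective j) fun p => ?_
  obtain hp | hp := (le_maximalIdeal p.2.ne_top).eq_or_lt
  · rw [hp]
    exact h.lTensor_residueField_injective hdim hflat
  · have := hloc p.asIdeal p.2 hp
    exact lTensor_injective_of_flat_localization p.asIdeal.primeCompl (h.injective j) (h.exact j)
      (h.surjective j) fun s hs => (isSMulRegular_quotient_of_mem_primeCompl _ hs).rTensor _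

theorem flat_of_isLocalRing [IsLocalRing R] {d : ℕ} (hdim : ringKrullDim R ≤ d)
    (h : IsFlatSyzygySeq R f g) {n : ℕ} (hn : Module.Flat R (S n)) {j : ℕ} (hj : d ≤ j) :
    Module.Flat R (S j) := by
  induction d using Nat.strong_induction_on generalizing R S F j with | _ d ih
  refine Nat.decreasingInduction' (m := j) (n := max n j) (P := fun k => Module.Flat R (S k))
    (fun k _ hjk hk => ?_) (le_max_right _ _) (h.flat_of_le hn (le_max_left _ _))
  have hdk : d ≤ k := hj.trans hjk
  refine h.flat_of_flat_succ (hdim.trans (by exact_mod_cast hdk)) hk fun p _ hp => ?_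
  have hlt : p.height < d := by
    have hmax : ((maximalIdeal R).height : WithBot ℕ∞) ≤ (d : ℕ∞) := by
      rw [maximalIdeal_height_eq_ringKrullDim]; exact hdim
    exact (Ideal.height_strict_mono_of_isPrime_of_isPrime hp).trans_le (by exact_mod_cast hmax)
  obtain ⟨e, he⟩ := ENat.ne_top_iff_exists.1 (ne_top_of_lt hlt)
  have hed : e < d := by rw [← he] at hlt; exact_mod_cast hlt
  refine ih e hed ?_ (h.baseChange (Localization.AtPrime p)) inferInstance (hed.le.trans hdk)
  rw [IsLocalization.AtPrime.ringKrullDim_eq_height p, ← he]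
  rfl

theorem flat_localization_of_height_le (h : IsFlatSyzygySeq R f g) {n : ℕ}
    (hn : Module.Flat R (S n)) {j : ℕ} (p : Ideal R) [p.IsPrime] (hj : p.height ≤ j) :
    Module.Flat (Localization.AtPrime p) (Localization.AtPrime p ⊗[R] S j) := by
  refine flat_of_isLocalRing (d := j) ?_ (h.baseChange (Localization.AtPrime p)) (n := n)
    inferInstance le_rfl
  rw [IsLocalization.AtPrime.ringKrullDim_eq_height p]
  exact_mod_cast hj

theorem flat_of_ringKrullDim_le (h : IsFlatSyzygySeq R f g) {n : ℕ} (hn : Module.Flat R (S n))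
    {j : ℕ} (hdim : ringKrullDim R ≤ j) : Module.Flat R (S j) := by
  refine Module.flat_of_isLocalized_maximal (S := R) (R := R) (S j)
    (fun P _ => Localization.AtPrime P ⊗[R] S j)
    (fun P _ => TensorProduct.mk R (Localization.AtPrime P) (S j) 1) fun P hP => ?_
  have hheight : ((P.height : ℕ∞) : WithBot ℕ∞) ≤ (j : ℕ∞) :=
    (Ideal.height_le_ringKrullDim_of_ne_top hP.ne_top).trans hdim
  have := h.flat_localization_of_height_le hn P (j := j) (by exact_mod_cast hheight)
  exact .trans R (Localization.AtPrime P) _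

end IsFlatSyzygySeq

/-! ### Local torsion modules -/

section IsLocalAt

variable {A : Type*} [CommRing A] {q : Ideal A} {T S : Type*} [AddCommGroup T] [Module A T]
  [AddCommGroup S] [Module A S]

/-- A module `T` is local at `q` if every element outside `q` acts bijectively on it, that is, if
`T` is canonically a module over the localization at `q`. -/
def IsLocalAt (q : Ideal A) (T : Type*) [AddCommGroup T] [Module A T] : Prop :=
  ∀ s ∉ q, Bijective (fun t : T => s • t)

namespace IsLocalAt

lemma tensor (h : IsLocalAt q T) : IsLocalAt q (T ⊗[A] S) := by
  intro r hr
  let e : T ≃ₗ[A] T := LinearEquiv.ofBijective (LinearMap.lsmul A T r) (h r hr)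
  convert (e.rTensor S).bijective with t
  induction t with
  | zero => simp
  | tmul x y => rw [smul_tmul']; rfl
  | add x y hx hy => rw [smul_add, map_add, hx, hy]

lemma submodule (h : IsLocalAt q T) {N : Submodule A T}
    (hN : ∀ s ∉ q, ∀ t, s • t ∈ N → t ∈ N) : IsLocalAt q N := by
  refine fun r hr => ⟨fun x y hxy => Subtype.ext ((h r hr).1 congr(($hxy : N).1)), fun y => ?_⟩
  obtain ⟨x, hx⟩ := (h r hr).2 y.1
  exact ⟨⟨x, hN r hr x (by rw [show r • x = y from hx]; exact y.2)⟩, Subtype.ext hx⟩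

lemma quotient (h : IsLocalAt q T) {N : Submodule A T}
    (hN : ∀ s ∉ q, ∀ t, s • t ∈ N → t ∈ N) : IsLocalAt q (T ⧸ N) := by
  refine fun r hr => ⟨(injective_iff_map_eq_zero (LinearMap.lsmul A (T ⧸ N) r)).2 fun y hy => ?_,
    fun y => ?_⟩
  · obtain ⟨y, rfl⟩ := N.mkQ_surjective y
    rw [LinearMap.lsmul_apply, ← map_smul] at hy
    exact (Submodule.Quotient.mk_eq_zero _).2 (hN r hr y ((Submodule.Quotient.mk_eq_zero _).1 hy))
  · obtain ⟨y, rfl⟩ := N.mkQ_surjective y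
    obtain ⟨x, rfl⟩ := (h r hr).2 y
    exact ⟨N.mkQ x, (map_smul _ _ _).symm⟩

lemma mem_torsionBySet_of_smul (h : IsLocalAt q T) (J : Ideal A) :
    ∀ s ∉ q, ∀ t, s • t ∈ Submodule.torsionBySet A T J → t ∈ Submodule.torsionBySet A T J := by
  intro s hs t ht
  rw [Submodule.mem_torsionBySet_iff] at ht ⊢
  refine fun a => (h s hs).1 ?_
  simpa only [smul_comm s, smul_zero] using ht a

lemma isLocalizedModule_id [q.IsPrime] (h : IsLocalAt q T) :
    IsLocalizedModule q.primeCompl (LinearMap.id : T →ₗ[A] T) where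
  map_units x := (Module.End.isUnit_iff _).2 (h x.1 x.2)
  surj y := ⟨(y, 1), by simp⟩
  exists_of_eq hab := ⟨1, by simpa using hab⟩

lemma exists_residueField_module [q.IsPrime] (h : IsLocalAt q T)
    (hq : ∀ a ∈ q, ∀ t : T, a • t = 0) :
    ∃ _ : Module q.ResidueField T, IsScalarTower A q.ResidueField T := by
  let R := Localization.AtPrime q
  have := h.isLocalizedModule_id
  let _ : Module R T := IsLocalizedModule.module q.primeCompl (LinearMap.id : T →ₗ[A] T)
  have : IsScalarTower A R T := IsLocalizedModule.isScalarTower_module _ LinearMap.id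
  have htor : Module.IsTorsionBySet R T (maximalIdeal R) := by
    rw [← Localization.AtPrime.map_eq_maximalIdeal, Ideal.map, Ideal.span,
      ← Module.isTorsionBySet_iff_is_torsion_by_span]
    rintro t ⟨_, a, ha, rfl⟩
    exact (algebraMap_smul R a t).trans (hq a ha t)
  exact ⟨htor.module, htor.isScalarTower⟩

lemma rTensor_injective_of_flat_localization [q.IsPrime] {T' : Type*} [AddCommGroup T']
    [Module A T'] [Module.Flat (Localization.AtPrime q) (Localization.AtPrime q ⊗[A] S)]
    (h : IsLocalAt q T') {i : T' →ₗ[A] T} (hi : Injective i) : Injective (i.rTensor S) := by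
  have : Module.Flat A (Localization.AtPrime q ⊗[A] S) := .trans A (Localization.AtPrime q) _
  let η := TensorProduct.mk A (Localization.AtPrime q) S 1
  refine Injective.of_comp (f := η.lTensor T) ?_
  have hcomm : η.lTensor T ∘ i.rTensor S = i.rTensor _ ∘ η.lTensor T' :=
    funext fun x => (rTensor_lTensor_comm i η x).symm
  rw [hcomm]
  exact (Module.Flat.rTensor_preserves_injective_linearMap i hi).comp
    (lTensor_mk_localization_injective q.primeCompl fun s hs => (h.tensor s hs).1)

end IsLocalAt

end IsLocalAt

section FinsuppTmul

universe v w

/-- The map `(tᵢ) ↦ ∑ tᵢ ⊗ sᵢ` attached to a family of elements `sᵢ` of `S`. It is bijective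
exactly when `T ⊗ S` is freely spanned by the `sᵢ` with coefficients in `T`. -/
noncomputable def finsuppTmul (A : Type*) [CommRing A] {I S : Type*} [AddCommGroup S] [Module A S]
    (s : I → S) (T : Type*) [AddCommGroup T] [Module A T] : (I →₀ T) →ₗ[A] T ⊗[A] S :=
  Finsupp.lsum A fun i => (TensorProduct.mk A T S).flip (s i)

variable {A : Type u} [CommRing A] {I : Type*} {S : Type v} [AddCommGroup S] [Module A S]
  {s : I → S}
  {T T' T'' : Type*} [AddCommGroup T] [Module A T] [AddCommGroup T'] [Module A T']
  [AddCommGroup T''] [Module A T'']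

@[simp]
lemma finsuppTmul_single (i : I) (t : T) : finsuppTmul A s T (Finsupp.single i t) = t ⊗ₜ s i := by
  simp [finsuppTmul]

variable (s) in
lemma finsuppTmul_comp_mapRange (φ : T →ₗ[A] T') :
    finsuppTmul A s T' ∘ₗ Finsupp.mapRange.linearMap φ = φ.rTensor S ∘ₗ finsuppTmul A s T := by
  ext i t
  simp

variable (s) in
lemma finsuppTmul_mapRange (φ : T →ₗ[A] T') (x : I →₀ T) :
    finsuppTmul A s T' (Finsupp.mapRange.linearMap φ x) = φ.rTensor S (finsuppTmul A s T x) :=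
  LinearMap.congr_fun (finsuppTmul_comp_mapRange s φ) x

lemma finsuppTmul_bijective_of_extension {i : T' →ₗ[A] T} {p : T →ₗ[A] T''} (hi : Injective i)
    (hip : Exact i p) (hp : Surjective p) (hiS : Injective (i.rTensor S))
    (h' : Bijective (finsuppTmul A s T')) (h'' : Bijective (finsuppTmul A s T'')) :
    Bijective (finsuppTmul A s T) := by
  constructor
  · rw [injective_iff_map_eq_zero]
    intro x hx
    have hpx : Finsupp.mapRange.linearMap p x = 0 :=
      h''.1 (by rw [finsuppTmul_mapRange, hx, map_zero, map_zero])
    rw [← LinearMap.mem_ker, Finsupp.ker_mapRange, hip.linearMap_ker_eq,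
      ← Finsupp.range_mapRange_linearMap i (LinearMap.ker_eq_bot.2 hi)] at hpx
    obtain ⟨x', rfl⟩ := hpx
    rw [finsuppTmul_mapRange, map_eq_zero_iff _ hiS, map_eq_zero_iff _ h'.1] at hx
    rw [hx, map_zero]
  · intro y
    obtain ⟨x, hx⟩ := h''.2 (p.rTensor S y)
    obtain ⟨x, rfl⟩ := Finsupp.mapRange_surjective _ (map_zero p) hp x
    obtain ⟨z, hz⟩ := (rTensor_exact S hip hp (y - finsuppTmul A s T x)).1 (by
      rw [map_sub, ← finsuppTmul_mapRange, ← hx, sub_eq_zero]; rfl)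
    obtain ⟨x', rfl⟩ := h'.2 z
    exact ⟨Finsupp.mapRange.linearMap i x' + x,
      by rw [map_add, finsuppTmul_mapRange, hz, sub_add_cancel]⟩

lemma finsuppTmul_bijective_of_directed {ι : Type*} [Nonempty ι] {N : ι → Submodule A T}
    (hdir : Directed (· ≤ ·) N) (hN : ∀ t, ∃ n, t ∈ N n)
    (hNS : ∀ n, Injective ((N n).subtype.rTensor S))
    (h : ∀ n, Bijective (finsuppTmul A s (N n))) : Bijective (finsuppTmul A s T) := by
  constructor
  · rw [injective_iff_map_eq_zero]
    intro x hx
    classical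
    choose n hn using fun i => hN (x i)
    obtain ⟨m, hm⟩ := hdir.finset_le (x.support.image n)
    have hxm (i : I) : x i ∈ N m := by
      by_cases hi : i ∈ x.support
      · exact hm _ (Finset.mem_image_of_mem n hi) (hn i)
      · rw [Finsupp.notMem_support_iff.1 hi]
        exact zero_mem _
    obtain ⟨x, rfl⟩ : x ∈ LinearMap.range (Finsupp.mapRange.linearMap (α := I) (N m).subtype) := by
      rw [Finsupp.range_mapRange_linearMap _ (N m).ker_subtype, Submodule.range_subtype]
      exact (Finsupp.mem_submodule_iff _ _).2 hxm
    rw [finsuppTmul_mapRange, map_eq_zero_iff _ (hNS m), map_eq_zero_iff _ (h m).1] at hx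
    rw [hx, map_zero]
  · rw [← LinearMap.range_eq_top, ← top_le_iff, ← span_tmul_eq_top, Submodule.span_le]
    rintro _ ⟨t, y, rfl⟩
    obtain ⟨n, hn⟩ := hN t
    obtain ⟨w, hw⟩ := (h n).2 ((⟨t, hn⟩ : N n) ⊗ₜ y)
    exact ⟨Finsupp.mapRange.linearMap (N n).subtype w, by rw [finsuppTmul_mapRange, hw]; rfl⟩

variable {q : Ideal A} [q.IsPrime]

variable (q S) in
lemma exists_basis_residueField_tensor :
    ∃ (I : Type (max u v)) (s : I → S) (b : Module.Basis I q.ResidueField (q.ResidueField ⊗[A] S)),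
      ∀ i, b i = 1 ⊗ₜ s i := by
  have hspan : ⊤ ≤ Submodule.span q.ResidueField
      (Set.range (TensorProduct.mk A q.ResidueField S 1)) := by
    rw [← Submodule.baseChange_top, Submodule.baseChange_eq_span, Submodule.map_top]
    rfl
  choose s hs using fun i => Module.Basis.ofSpan_subset hspan ⟨i, rfl⟩
  exact ⟨_, s, Module.Basis.ofSpan hspan, fun i => (hs i).symm⟩

lemma finsuppTmul_bijective_of_isScalarTower {K : Type*} [CommRing K] [Algebra A K] [Module K T]
    [IsScalarTower A K T] (b : Module.Basis I K (K ⊗[A] S)) (hb : ∀ i, b i = 1 ⊗ₜ s i) :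
    Bijective (finsuppTmul A s T) := by
  classical
  let e := (equivFinsuppOfBasisRight (M := T) b).symm.restrictScalars A ≪≫ₗ
    (AlgebraTensorModule.cancelBaseChange A K K T S).restrictScalars A
  convert e.bijective
  suffices h : finsuppTmul A s T = e.toLinearMap from congr(⇑$h)
  ext i t
  simp [e, hb]

lemma IsLocalAt.finsuppTmul_bijective_of_pow
    [Module.Flat (Localization.AtPrime q) (Localization.AtPrime q ⊗[A] S)]
    (b : Module.Basis I q.ResidueField (q.ResidueField ⊗[A] S)) (hb : ∀ i, b i = 1 ⊗ₜ s i) {n : ℕ}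
    (h : IsLocalAt q T) (hn : ∀ a ∈ q ^ n, ∀ t : T, a • t = 0) : Bijective (finsuppTmul A s T) := by
  induction n generalizing T with
  | zero =>
    have : Subsingleton T := subsingleton_of_forall_eq 0 fun t => by simpa using hn 1 (by simp) t
    exact ⟨injective_of_subsingleton _, surjective_to_subsingleton _⟩
  | succ n ih =>
    let N := Submodule.torsionBySet A T q
    have hmem := h.mem_torsionBySet_of_smul q
    have hN : Bijective (finsuppTmul A s N) := by
      obtain ⟨_, _⟩ := (h.submodule hmem).exists_residueField_module fun a ha t =>
        Subtype.ext ((Submodule.mem_torsionBySet_iff _ _).1 t.2 ⟨a, ha⟩)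
      exact finsuppTmul_bijective_of_isScalarTower b hb
    have hquot : Bijective (finsuppTmul A s (T ⧸ N)) := by
      refine ih (h.quotient hmem) fun a ha t => ?_
      obtain ⟨t, rfl⟩ := N.mkQ_surjective t
      refine (Submodule.Quotient.mk_eq_zero _).2 <|
        (Submodule.mem_torsionBySet_iff _ _).2 fun c => ?_
      rw [smul_smul, hn _ (pow_succ' q n ▸ Ideal.mul_mem_mul c.2 ha)]
    exact finsuppTmul_bijective_of_extension N.injective_subtype (LinearMap.exact_subtype_mkQ N)
      N.mkQ_surjective ((h.submodule hmem).rTensor_injective_of_flat_localization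
        N.injective_subtype) hN hquot

/-- `T` is `q`-power torsion: every element of `T` is killed by some power of `q`. -/
def IsPowTorsion (q : Ideal A) (T : Type*) [AddCommGroup T] [Module A T] : Prop :=
  ∀ t : T, ∃ n, ∀ a ∈ q ^ n, a • t = 0

variable (q S) in
theorem exists_finsuppTmul_bijective
    [Module.Flat (Localization.AtPrime q) (Localization.AtPrime q ⊗[A] S)] :
    ∃ (I : Type (max u v)) (s : I → S), ∀ (T : Type w) [AddCommGroup T] [Module A T],
      IsLocalAt q T → IsPowTorsion q T → Bijective (finsuppTmul A s T) := by
  obtain ⟨I, s, b, hb⟩ := exists_basis_residueField_tensor S q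
  refine ⟨I, s, fun T _ _ h hT => ?_⟩
  let N (n : ℕ) : Submodule A T := Submodule.torsionBySet A T (q ^ n : Ideal A)
  have hN (n : ℕ) : IsLocalAt q (N n) := h.submodule (h.mem_torsionBySet_of_smul _)
  have hmono : Monotone N := fun m n hmn =>
    Submodule.torsionBySet_le_torsionBySet_of_subset (Ideal.pow_le_pow_right hmn)
  refine finsuppTmul_bijective_of_directed hmono.directed_le (fun t => ?_)
    (fun n => (hN n).rTensor_injective_of_flat_localization (N n).injective_subtype)
    fun n => (hN n).finsuppTmul_bijective_of_pow b hb (n := n) fun a ha t =>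
      Subtype.ext ((Submodule.mem_torsionBySet_iff _ _).1 t.2 ⟨a, ha⟩)
  obtain ⟨n, hn⟩ := hT t
  exact ⟨n, (Submodule.mem_torsionBySet_iff _ _).2 fun a => hn a a.2⟩

end FinsuppTmul

/-! ### Modules with support in a set of primes -/

section SupportedIn

variable {A : Type*} [CommRing A] {X Y : Type*} [AddCommGroup X] [Module A X] [AddCommGroup Y]
  [Module A Y] {W W' : Set (PrimeSpectrum A)} {x : X}

/-- The closed subset `V(I)` of the spectrum. -/
abbrev primesAbove (I : Ideal A) : Set (PrimeSpectrum A) := {p | I ≤ p.asIdeal}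

/-- For a prime `I`, the subset `V(I) ∖ {I}` of the spectrum. -/
abbrev primesStrictlyAbove (I : Ideal A) : Set (PrimeSpectrum A) := {p | I < p.asIdeal}

/-- The submodule `Γ_W X` of the elements of `X` whose annihilator is only contained in primes
of `W`. -/
def supportedIn (W : Set (PrimeSpectrum A)) (X : Type*) [AddCommGroup X] [Module A X] :
    Submodule A X where
  carrier := {x | ∀ p : PrimeSpectrum A, Ideal.torsionOf A X x ≤ p.asIdeal → p ∈ W}
  add_mem' {x y} hx hy p hp := by
    have hle : Ideal.torsionOf A X x ⊓ Ideal.torsionOf A X y ≤ Ideal.torsionOf A X (x + y) := by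
      rintro a ⟨hax, hay⟩
      rw [SetLike.mem_coe, Ideal.mem_torsionOf_iff] at hax hay
      rw [Ideal.mem_torsionOf_iff, smul_add, hax, hay, add_zero]
    exact (p.2.inf_le.1 (hle.trans hp)).elim (hx p) (hy p)
  zero_mem' p hp := absurd (top_le_iff.1 (by rwa [Ideal.torsionOf_zero] at hp)) p.2.ne_top
  smul_mem' a x hx p hp := hx p (le_trans (fun b hb => by
    rw [Ideal.mem_torsionOf_iff] at hb ⊢
    rw [smul_comm, hb, smul_zero]) hp)

lemma supportedIn_mono (h : W ⊆ W') : supportedIn W X ≤ supportedIn W' X :=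
  fun _ hx p hp => h (hx p hp)

variable (X) in
lemma supportedIn_univ : supportedIn (Set.univ : Set (PrimeSpectrum A)) X = ⊤ :=
  top_le_iff.1 fun _ _ _ _ => trivial

variable (W W' X) in
lemma supportedIn_inter : supportedIn (W ∩ W') X = supportedIn W X ⊓ supportedIn W' X :=
  le_antisymm (le_inf (supportedIn_mono Set.inter_subset_left)
    (supportedIn_mono Set.inter_subset_right)) fun _ hx p hp => ⟨hx.1 p hp, hx.2 p hp⟩

variable (X) in
lemma supportedIn_empty : supportedIn (∅ : Set (PrimeSpectrum A)) X = ⊥ := by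
  refine le_bot_iff.1 fun x hx => ?_
  by_contra h
  obtain ⟨m, hm, hle⟩ := Ideal.exists_le_maximal _
    (mt (Ideal.torsionOf_eq_top_iff _ x).1 h : Ideal.torsionOf A X x ≠ ⊤)
  exact hx ⟨m, hm.isPrime⟩ hle

lemma map_mem_supportedIn (f : X →ₗ[A] Y) (hx : x ∈ supportedIn W X) : f x ∈ supportedIn W Y :=
  fun p hp => hx p (le_trans (fun b hb => by
    rw [Ideal.mem_torsionOf_iff] at hb ⊢
    rw [← map_smul, hb, map_zero]) hp)

lemma mem_supportedIn_of_smul_eq_zero (I : Ideal A) (hI : ∀ a ∈ I, a • x = 0)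
    (hW : primesAbove I ⊆ W) : x ∈ supportedIn W X :=
  fun _ hp => hW (le_trans (fun b hb => (Ideal.mem_torsionOf_iff _ _).2 (hI b hb)) hp)

lemma mem_supportedIn_primesAbove [IsNoetherianRing A] {q : Ideal A} :
    x ∈ supportedIn (primesAbove q) X ↔ ∃ n, ∀ a ∈ q ^ n, a • x = 0 := by
  constructor
  · intro hx
    have hrad : q ≤ (Ideal.torsionOf A X x).radical := by
      rw [Ideal.radical_eq_sInf]
      exact le_sInf fun p hp => hx ⟨p, hp.2⟩ hp.1
    obtain ⟨n, hn⟩ := Ideal.exists_pow_le_of_le_radical_of_fg hrad (IsNoetherian.noetherian q)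
    exact ⟨n, fun a ha => (Ideal.mem_torsionOf_iff _ _).1 (hn ha)⟩
  · rintro ⟨n, hn⟩
    exact mem_supportedIn_of_smul_eq_zero (q ^ n) hn fun p hp => p.2.le_of_pow_le hp

lemma mem_of_annihilator_range_le {M : Type*} [AddCommGroup M] [Module A M] [Module.Finite A M]
    (f : M →ₗ[A] X) (hf : ∀ m, f m ∈ supportedIn W X) {p : PrimeSpectrum A}
    (hp : Module.annihilator A (LinearMap.range f) ≤ p.asIdeal) : p ∈ W := by
  rw [← Module.mem_support_iff_of_finite, Module.mem_support_iff_exists_annihilator] at hp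
  obtain ⟨⟨_, m, rfl⟩, hm⟩ := hp
  refine hf m p (le_trans (fun a ha => ?_) hm)
  rw [Submodule.mem_annihilator_span_singleton]
  exact Subtype.ext ((Ideal.mem_torsionOf_iff _ _).1 ha)

-- By the Artin-Rees lemma.
lemma exists_pow_annihilator_range_inf_le_ker [IsNoetherianRing A] {M : Type*} [AddCommGroup M]
    [Module A M] [Module.Finite A M] {N : Submodule A M} (f : N →ₗ[A] X) :
    ∃ n, ∀ x : N, x.1 ∈ Module.annihilator A (LinearMap.range f) ^ n • (⊤ : Submodule A M) →
      f x = 0 := by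
  set I := Module.annihilator A (LinearMap.range f)
  obtain ⟨k, hk⟩ := I.exists_pow_inf_eq_pow_smul N
  refine ⟨k + 1, fun x hx => ?_⟩
  have hker : I • N ≤ (LinearMap.ker f).map N.subtype :=
    Submodule.smul_le.2 fun r hr y hy => ⟨r • ⟨y, hy⟩, by
      rw [SetLike.mem_coe, LinearMap.mem_ker, map_smul]
      exact congr($(Module.mem_annihilator.1 hr ⟨f ⟨y, hy⟩, _, rfl⟩).1), rfl⟩
  have hxN : x.1 ∈ I • N := by
    have hmem : x.1 ∈ I ^ (k + 1) • (⊤ : Submodule A M) ⊓ N := ⟨hx, x.2⟩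
    rw [hk (k + 1) (by lia), Nat.add_sub_cancel_left, pow_one] at hmem
    exact (smul_mono_right I inf_le_right : _ ≤ I • N) hmem
  obtain ⟨y, hy, hyx⟩ := hker hxN
  rwa [← Subtype.ext hyx]

end SupportedIn

section Injective

variable {A : Type u} [CommRing A] {X : Type u} [AddCommGroup X] [Module A X]

lemma exists_comp_eq_of_ker_le [Module.Injective A X] {M N : Type u} [AddCommGroup M] [Module A M]
    [AddCommGroup N] [Module A N] (i : M →ₗ[A] N) (g : M →ₗ[A] X)
    (h : LinearMap.ker i ≤ LinearMap.ker g) : ∃ k : N →ₗ[A] X, k ∘ₗ i = g := by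
  obtain ⟨k, hk⟩ := Module.Injective.out ((LinearMap.ker i).liftQ i le_rfl)
    (LinearMap.ker_eq_bot.1 (Submodule.ker_liftQ_eq_bot _ _ _ le_rfl)) ((LinearMap.ker i).liftQ g h)
  exact ⟨k, LinearMap.ext fun m => hk (Submodule.Quotient.mk m)⟩

lemma exists_add_eq_of_inf_smul_eq_zero [Module.Injective A X] (I J : Ideal A) (x : X)
    (hx : ∀ a ∈ I ⊓ J, a • x = 0) :
    ∃ y z, (∀ a ∈ I, a • y = 0) ∧ (∀ a ∈ J, a • z = 0) ∧ y + z = x := by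
  obtain ⟨k, hk⟩ := exists_comp_eq_of_ker_le (I.mkQ.prod J.mkQ) (LinearMap.toSpanSingleton A X x)
    fun a ha => hx a (by simpa [LinearMap.ker_prod] using ha)
  refine ⟨k (I.mkQ 1, 0), k (0, J.mkQ 1), fun a ha => ?_, fun a ha => ?_, ?_⟩
  · have hzero : I.mkQ (a • 1) = 0 := (Submodule.Quotient.mk_eq_zero _).2 (by simpa using ha)
    rw [← map_smul, Prod.smul_mk, smul_zero, ← map_smul, hzero, Prod.mk_zero_zero, map_zero]
  · have hzero : J.mkQ (a • 1) = 0 := (Submodule.Quotient.mk_eq_zero _).2 (by simpa using ha)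
    rw [← map_smul, Prod.smul_mk, smul_zero, ← map_smul, hzero, Prod.mk_zero_zero, map_zero]
  · rw [← map_add, Prod.mk_add_mk, zero_add, add_zero]
    simpa using LinearMap.congr_fun hk 1

variable [IsNoetherianRing A]

instance supportedIn_injective [Module.Injective A X] (W : Set (PrimeSpectrum A)) :
    Module.Injective A (supportedIn W X) := by
  refine Module.Baer.injective fun I f => ?_
  let g : I →ₗ[A] X := (supportedIn W X).subtype ∘ₗ f
  let 𝔞 := Module.annihilator A (LinearMap.range g)
  obtain ⟨n, hn⟩ := exists_pow_annihilator_range_inf_le_ker g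
  obtain ⟨k, hk⟩ := exists_comp_eq_of_ker_le ((𝔞 ^ n).mkQ ∘ₗ I.subtype) g fun x hx =>
    hn x (by simpa using (Submodule.Quotient.mk_eq_zero (𝔞 ^ n)).1 hx)
  have hmem (a : A) : k ((𝔞 ^ n).mkQ a) ∈ supportedIn W X := by
    refine mem_supportedIn_of_smul_eq_zero (𝔞 ^ n) (fun b hb => ?_) fun p hp =>
      mem_of_annihilator_range_le g (fun m => (f m).2) (p.2.le_of_pow_le hp)
    have hzero : (𝔞 ^ n).mkQ (b • a) = 0 :=
      (Submodule.Quotient.mk_eq_zero _).2 (Ideal.mul_mem_right _ _ hb)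
    rw [← map_smul, ← map_smul, hzero, map_zero]
  exact ⟨(k ∘ₗ (𝔞 ^ n).mkQ).codRestrict _ hmem, fun x hx =>
    Subtype.ext (LinearMap.congr_fun hk ⟨x, hx⟩)⟩

lemma exists_pow_succ_smul_eq [Module.Injective A X] (s : A) (x : X) :
    ∃ (n : ℕ) (y : X), s ^ (n + 1) • y = s ^ n • x := by
  let K : ℕ →o Ideal A := ⟨fun n => LinearMap.ker (LinearMap.lsmul A A (s ^ n)),
    monotone_nat_of_le_succ fun n a ha => by
      simp only [LinearMap.mem_ker, LinearMap.lsmul_apply, smul_eq_mul] at ha ⊢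
      rw [pow_succ', mul_assoc, ha, mul_zero]⟩
  obtain ⟨n, hn⟩ := monotone_stabilizes_iff_noetherian.2 ‹_› K
  obtain ⟨k, hk⟩ := exists_comp_eq_of_ker_le (LinearMap.lsmul A A (s ^ (n + 1)))
    (LinearMap.toSpanSingleton A X (s ^ n • x)) fun a ha => by
      have hmem : a ∈ K n := hn (n + 1) n.le_succ ▸ ha
      have hzero : s ^ n * a = 0 := hmem
      rw [LinearMap.mem_ker, LinearMap.toSpanSingleton_apply, smul_smul, mul_comm, hzero, zero_smul]
  refine ⟨n, k 1, ?_⟩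
  rw [← map_smul]
  simpa using LinearMap.congr_fun hk 1

lemma supportedIn_le_iSup [Module.Injective A X] (W : Set (PrimeSpectrum A)) :
    supportedIn W X ≤ ⨆ p : W, supportedIn (primesAbove p.1.asIdeal) X := by
  intro x hx
  obtain ⟨s, hs, hprim⟩ := Submodule.isLasker A A (Ideal.torsionOf A X x)
  suffices key : ∀ t ⊆ s, ∀ y : X, (∀ a ∈ t.inf id, a • y = 0) →
      y ∈ ⨆ p : W, supportedIn (primesAbove p.1.asIdeal) X from
    key s subset_rfl x fun a ha => (Ideal.mem_torsionOf_iff _ _).1 (hs ▸ ha)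
  classical
  intro t
  induction t using Finset.induction_on with
  | empty =>
    intro _ y hy
    rw [← one_smul A y, hy 1 (by simp)]
    exact zero_mem _
  | insert I t _ ih =>
    intro hts y hy
    obtain ⟨hIs, hts⟩ := Finset.insert_subset_iff.1 hts
    rw [Finset.inf_insert] at hy
    obtain ⟨y, z, hIy, htz, rfl⟩ := exists_add_eq_of_inf_smul_eq_zero I (t.inf id) y hy
    refine add_mem ?_ (ih hts z htz)
    have hprime : (Ideal.radical I).IsPrime := Ideal.isPrime_radical (hprim hIs)
    have hle : Ideal.torsionOf A X x ≤ I := hs ▸ Finset.inf_le (f := id) hIs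
    refine Submodule.mem_iSup_of_mem
      (⟨⟨_, hprime⟩, hx ⟨_, hprime⟩ (hle.trans Ideal.le_radical)⟩ : W) ?_
    exact mem_supportedIn_of_smul_eq_zero I hIy fun p hp => p.2.radical_le_iff.2 hp

end Injective

section SupportSubquotient

variable {A : Type*} [CommRing A] {X Y Z : Type*} [AddCommGroup X] [Module A X] [AddCommGroup Y]
  [Module A Y] [AddCommGroup Z] [Module A Z]
  {W W' W'' W₁ W₁' W₂ W₂' W₃ W₃' : Set (PrimeSpectrum A)}

/-- The subquotient `Γ_W X / (Γ_W X ∩ Γ_{W'} X)` of `X`. For `W' ⊆ W` and injective `X` it only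
involves the indecomposable injectives attached to the primes in `W ∖ W'`. -/
abbrev SupportSubquotient (W W' : Set (PrimeSpectrum A)) (X : Type*) [AddCommGroup X]
    [Module A X] : Type _ :=
  supportedIn W X ⧸ (supportedIn W' X).comap (supportedIn W X).subtype

namespace SupportSubquotient

variable (W') in
/-- The class in `SupportSubquotient W W' X` of an element of `Γ_W X`. -/
def mk (x : X) (hx : x ∈ supportedIn W X) : SupportSubquotient W W' X :=
  Submodule.Quotient.mk ⟨x, hx⟩

lemma exists_mk_eq (t : SupportSubquotient W W' X) : ∃ x hx, mk W' x hx = t := by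
  obtain ⟨⟨x, hx⟩, rfl⟩ := Submodule.Quotient.mk_surjective _ t
  exact ⟨x, hx, rfl⟩

lemma mk_eq_zero {x : X} {hx : x ∈ supportedIn W X} : mk W' x hx = 0 ↔ x ∈ supportedIn W' X := by
  rw [mk, Submodule.Quotient.mk_eq_zero, Submodule.mem_comap, Submodule.subtype_apply]

lemma smul_mk {x : X} {hx : x ∈ supportedIn W X} (a : A) :
    a • mk W' x hx = mk W' (a • x) (Submodule.smul_mem _ _ hx) := rfl

/-- The map of subquotients induced by a linear map and by enlarging both sets of primes. -/
def map (h : W₁ ⊆ W₂) (h' : W₁' ⊆ W₂') (f : X →ₗ[A] Y) :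
    SupportSubquotient W₁ W₁' X →ₗ[A] SupportSubquotient W₂ W₂' Y :=
  Submodule.mapQ _ _ (f.restrict fun _ hx => supportedIn_mono h (map_mem_supportedIn f hx) :
      supportedIn W₁ X →ₗ[A] supportedIn W₂ Y)
    fun x hx => Submodule.mem_comap.2 <| Submodule.mem_comap.2 <|
      supportedIn_mono h' (map_mem_supportedIn f (x := x.1) hx)

@[simp]
lemma map_mk (h : W₁ ⊆ W₂) (h' : W₁' ⊆ W₂') (f : X →ₗ[A] Y) (x : X) (hx) :
    map h h' f (mk W₁' x hx) = mk W₂' (f x) (supportedIn_mono h (map_mem_supportedIn f hx)) := rfl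

lemma map_comp_map (h : W₁ ⊆ W₂) (h' : W₁' ⊆ W₂') (f : X →ₗ[A] Y) (k : W₂ ⊆ W₃) (k' : W₂' ⊆ W₃')
    (g : Y →ₗ[A] Z) : map k k' g ∘ₗ map h h' f = map (h.trans k) (h'.trans k') (g ∘ₗ f) := by
  ext
  rfl

lemma map_id :
    map le_rfl le_rfl LinearMap.id = (LinearMap.id : SupportSubquotient W W' X →ₗ[A] _) := by
  ext
  rfl

lemma map_add (h : W₁ ⊆ W₂) (h' : W₁' ⊆ W₂') (f g : X →ₗ[A] Y) :
    map h h' (f + g) = map h h' f + map h h' g := by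
  ext
  rfl

variable (X) in
lemma map_injective (h : W₁ ⊆ W₂) (h' : W₁' ⊆ W₂') (hinter : W₁ ∩ W₂' ⊆ W₁') :
    Injective (map h h' (LinearMap.id : X →ₗ[A] X)) := by
  refine (injective_iff_map_eq_zero _).2 fun t ht => ?_
  obtain ⟨x, hx, rfl⟩ := exists_mk_eq t
  rw [map_mk, mk_eq_zero] at ht
  rw [mk_eq_zero]
  exact supportedIn_mono hinter (supportedIn_inter X W₁ W₂' ▸ ⟨hx, ht⟩)

variable (X W) in
lemma map_surjective (h' : W₁' ⊆ W₂') :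
    Surjective (map (le_refl W) h' (LinearMap.id : X →ₗ[A] X)) := by
  intro t
  obtain ⟨x, hx, rfl⟩ := exists_mk_eq t
  exact ⟨mk _ x hx, rfl⟩

variable (X) in
lemma map_exact (h : W' ⊆ W) (h' : W'' ⊆ W') :
    Exact (map h (le_refl W'') (LinearMap.id : X →ₗ[A] X))
      (map (le_refl W) h' (LinearMap.id : X →ₗ[A] X)) := by
  intro t
  obtain ⟨x, hx, rfl⟩ := exists_mk_eq t
  rw [map_mk, mk_eq_zero]
  refine ⟨fun hx' => ⟨mk _ x hx', rfl⟩, ?_⟩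
  rintro ⟨s, hs⟩
  obtain ⟨y, hy, rfl⟩ := exists_mk_eq s
  have hsub : y - x ∈ supportedIn W'' X :=
    mk_eq_zero (hx := sub_mem (supportedIn_mono h hy) hx).1 (sub_eq_zero.2 hs)
  simpa using sub_mem hy (supportedIn_mono h' hsub)

end SupportSubquotient

open SupportSubquotient (exists_mk_eq mk_eq_zero smul_mk)

variable (X W) in
/-- Dividing by `Γ_∅ X = 0` changes nothing. -/
noncomputable def supportSubquotientEmptyEquiv :
    SupportSubquotient W ∅ X ≃ₗ[A] supportedIn W X :=
  Submodule.quotEquivOfEqBot _ (by simp [supportedIn_empty])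

instance {A X : Type u} [CommRing A] [IsNoetherianRing A] [AddCommGroup X] [Module A X]
    [Module.Injective A X] (W : Set (PrimeSpectrum A)) :
    Module.Injective A (SupportSubquotient W ∅ X) :=
  (((Module.Baer.of_injective (supportedIn_injective W)).of_equiv
    (supportSubquotientEmptyEquiv X W).symm)).injective

/-- The subquotient of `X` attached to the single prime `q`. -/
abbrev PrimeSubquotient (q : Ideal A) (X : Type*) [AddCommGroup X] [Module A X] : Type _ :=
  SupportSubquotient (primesAbove q) (primesStrictlyAbove q) X

namespace PrimeSubquotient

variable {q : Ideal A}

lemma smul_injective [hq : q.IsPrime] {s : A} (hs : s ∉ q) :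
    Injective (s • · : PrimeSubquotient q X → PrimeSubquotient q X) := by
  refine (injective_iff_map_eq_zero (LinearMap.lsmul A (PrimeSubquotient q X) s)).2 fun t ht => ?_
  obtain ⟨x, hx, rfl⟩ := exists_mk_eq t
  rw [LinearMap.lsmul_apply, smul_mk, mk_eq_zero] at ht
  refine mk_eq_zero.2 fun p hp => lt_of_le_of_ne (a := q) (hx p hp) ?_
  rintro rfl
  obtain ⟨b, hb, hbq⟩ := SetLike.not_le_iff_exists.1 (mt (ht p) (lt_irrefl p.asIdeal))
  rw [Ideal.mem_torsionOf_iff, smul_smul] at hb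
  exact (hq.mem_or_mem (hp ((Ideal.mem_torsionOf_iff _ _).2 hb))).elim hbq hs

variable [IsNoetherianRing A]

variable (q X) in
lemma isPowTorsion : IsPowTorsion q (PrimeSubquotient q X) := by
  intro t
  obtain ⟨x, hx, rfl⟩ := exists_mk_eq t
  obtain ⟨n, hn⟩ := mem_supportedIn_primesAbove.1 hx
  refine ⟨n, fun a ha => ?_⟩
  rw [smul_mk, mk_eq_zero, hn a ha]
  exact zero_mem _

lemma isLocalAt {A : Type u} [CommRing A] [IsNoetherianRing A] (q : Ideal A) [hq : q.IsPrime]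
    (X : Type u) [AddCommGroup X] [Module A X] [Module.Injective A X] :
    IsLocalAt q (PrimeSubquotient q X) := by
  refine fun s hs => ⟨smul_injective hs, fun t => ?_⟩
  obtain ⟨⟨x, hx⟩, rfl⟩ := Submodule.Quotient.mk_surjective _ t
  obtain ⟨n, y, hy⟩ := exists_pow_succ_smul_eq s (⟨x, hx⟩ : supportedIn (primesAbove q) X)
  refine ⟨Submodule.Quotient.mk y, smul_injective (fun h => hs (hq.mem_of_pow_mem n h)) ?_⟩
  simp only [smul_smul, ← pow_succ, ← Submodule.Quotient.mk_smul, hy]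

end PrimeSubquotient

end SupportSubquotient

/-! ### Decomposition along a stratum -/

section IsDirectSum

variable {A : Type*} [CommRing A] {I : Type*} {X X' : I → Type*} {Y Y' Z : Type*}
  [∀ i, AddCommGroup (X i)] [∀ i, Module A (X i)] [∀ i, AddCommGroup (X' i)]
  [∀ i, Module A (X' i)] [AddCommGroup Y] [Module A Y] [AddCommGroup Y'] [Module A Y']
  [AddCommGroup Z] [Module A Z] {α : ∀ i, X i →ₗ[A] Y} {β : ∀ i, X' i →ₗ[A] Y'}

open Classical in
/-- The maps `α i` exhibit `Y` as the direct sum of the modules `X i`. -/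
def IsDirectSum (α : ∀ i, X i →ₗ[A] Y) : Prop :=
  Bijective (DirectSum.toModule A I Y α)

namespace IsDirectSum

lemma of_bijective [DecidableEq I] (h : Bijective (DirectSum.toModule A I Y α)) :
    IsDirectSum α := by
  unfold IsDirectSum
  convert h

lemma of_linearEquiv [DecidableEq I] (e : (DirectSum I X) ≃ₗ[A] Y)
    (he : ∀ i x, e (DirectSum.lof A I X i x) = α i x) : IsDirectSum α := by
  have heq : DirectSum.toModule A I Y α = e.toLinearMap :=
    DirectSum.linearMap_ext A fun i => LinearMap.ext fun x => by simp [he]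
  exact of_bijective (heq ▸ e.bijective)

lemma of_finsupp_bijective {T : Type*} [AddCommGroup T] [Module A T] {φ : (I →₀ T) →ₗ[A] Y}
    (h : Bijective φ) : IsDirectSum fun i => φ ∘ₗ Finsupp.lsingle i := by
  classical
  exact of_linearEquiv ((finsuppLEquivDirectSum A T I).symm ≪≫ₗ .ofBijective φ h) fun i x => by simp

open Classical in
/-- The isomorphism from the direct sum to `Y`. -/
noncomputable def linearEquiv (h : IsDirectSum α) : (DirectSum I X) ≃ₗ[A] Y :=
  .ofBijective _ h

open Classical in
@[simp]
lemma linearEquiv_lof (h : IsDirectSum α) (i : I) (x : X i) :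
    h.linearEquiv (DirectSum.lof A I X i x) = α i x :=
  DirectSum.toModule_lof A i x

lemma hom_ext (h : IsDirectSum α) {g g' : Y →ₗ[A] Z} (hg : ∀ i x, g (α i x) = g' (α i x)) :
    g = g' := by
  classical
  refine LinearMap.cancel_right h.2 |>.1 <| DirectSum.linearMap_ext A fun i => ?_
  ext x
  simpa using hg i x

lemma comp_linearEquiv (h : IsDirectSum α) (e : ∀ i, X' i ≃ₗ[A] X i) :
    IsDirectSum fun i => α i ∘ₗ (e i).toLinearMap := by
  classical
  exact of_linearEquiv (DFinsupp.mapRange.linearEquiv e ≪≫ₗ h.linearEquiv) fun i x => by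
    rw [LinearMap.comp_apply, ← h.linearEquiv_lof]
    exact congrArg h.linearEquiv (DFinsupp.mapRange_single (hf := fun _ => map_zero _))

lemma exists_desc (h : IsDirectSum α) (f : ∀ i, X i →ₗ[A] Z) :
    ∃ g : Y →ₗ[A] Z, ∀ i x, g (α i x) = f i x := by
  classical
  refine ⟨DirectSum.toModule A I Z f ∘ₗ h.linearEquiv.symm.toLinearMap, fun i x => ?_⟩
  rw [← h.linearEquiv_lof, LinearMap.comp_apply, LinearEquiv.coe_coe, LinearEquiv.symm_apply_apply,
    DirectSum.toModule_lof]

lemma injective (h : IsDirectSum α) (h' : IsDirectSum β) (φ : ∀ i, X i →ₗ[A] X' i) (ψ : Y →ₗ[A] Y')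
    (hφ : ∀ i x, ψ (α i x) = β i (φ i x)) (hinj : ∀ i, Injective (φ i)) : Injective ψ := by
  classical
  have hcomm : ψ ∘ₗ h.linearEquiv.toLinearMap = h'.linearEquiv.toLinearMap ∘ₗ DirectSum.lmap φ :=
    DirectSum.linearMap_ext A fun i => LinearMap.ext fun x => by simp [hφ]
  refine (Injective.of_comp_iff' _ h.linearEquiv.bijective).1 ?_
  change Injective (ψ ∘ₗ h.linearEquiv.toLinearMap)
  rw [hcomm]
  exact h'.linearEquiv.injective.comp ((DirectSum.lmap_injective φ).2 hinj)

lemma rTensor (h : IsDirectSum α) (S : Type*) [AddCommGroup S] [Module A S] :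
    IsDirectSum fun i => (α i).rTensor S := by
  classical
  refine of_linearEquiv ((directSumLeft A A X S).symm ≪≫ₗ h.linearEquiv.rTensor S) fun i x => ?_
  induction x with
  | zero => simp
  | add x y hx hy => rw [map_add, map_add, hx, hy, map_add]
  | tmul x s => simp [directSumLeft_symm_lof_tmul]

lemma lTensor_toSpanSingleton {S T : Type*} [AddCommGroup S] [Module A S] [AddCommGroup T]
    [Module A T] {s : I → S} (h : Bijective (finsuppTmul A s T)) :
    IsDirectSum fun i => (LinearMap.toSpanSingleton A S (s i)).lTensor T := by
  convert (of_finsupp_bijective h).comp_linearEquiv fun _ => TensorProduct.rid A T using 2 with i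
  ext t
  simp

end IsDirectSum

end IsDirectSum

section IsStratum

variable {A : Type u} [CommRing A] {W W' : Set (PrimeSpectrum A)}

/-- `W ∖ W'` is a difference of specialization-closed sets of primes containing no proper
specializations, so that `SupportSubquotient W W'` of an injective module splits over its points. -/
structure IsStratum (W W' : Set (PrimeSpectrum A)) : Prop where
  isUpperSet : IsUpperSet W
  isUpperSet' : IsUpperSet W'
  primesStrictlyAbove_subset : ∀ q ∈ W, q ∉ W' → primesStrictlyAbove q.asIdeal ⊆ W'

namespace IsStratum

variable {X : Type*} [AddCommGroup X] [Module A X]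

/-- The inclusion of the contribution of the prime `q` in `SupportSubquotient W W' X`. -/
def ι (h : IsStratum W W') (X : Type*) [AddCommGroup X] [Module A X]
    (q : (W \ W' : Set (PrimeSpectrum A))) :
    PrimeSubquotient q.1.asIdeal X →ₗ[A] SupportSubquotient W W' X :=
  SupportSubquotient.map (fun _ hp => h.isUpperSet hp q.2.1)
    (h.primesStrictlyAbove_subset _ q.2.1 q.2.2) LinearMap.id

lemma ι_injective (h : IsStratum W W') (q : (W \ W' : Set (PrimeSpectrum A))) :
    Injective (h.ι X q) :=
  SupportSubquotient.map_injective X _ _ fun p hp => lt_of_le_of_ne (a := q.1.asIdeal) hp.1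
    fun heq => q.2.2 ((PrimeSpectrum.ext heq : q.1 = p) ▸ hp.2)

lemma not_le (h : IsStratum W W') {q q' : (W \ W' : Set (PrimeSpectrum A))} (hne : q' ≠ q) :
    ¬ q'.1.asIdeal ≤ q.1.asIdeal := fun hle => hle.lt_or_eq.elim
  (fun hlt => q.2.2 (h.primesStrictlyAbove_subset _ q'.2.1 q'.2.2 hlt))
  fun heq => hne (Subtype.ext (PrimeSpectrum.ext heq))

variable [IsNoetherianRing A]

-- The summands of `z` at primes other than `q` are killed by elements outside `q`.
lemma exists_smul_eq_smul_lof [DecidableEq (W \ W' : Set (PrimeSpectrum A))]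
    (h : IsStratum W W') (q : (W \ W' : Set (PrimeSpectrum A)))
    (z : DirectSum (W \ W' : Set (PrimeSpectrum A)) fun q => PrimeSubquotient q.1.asIdeal X) :
    ∃ s ∉ q.1.asIdeal,
      s • z = s • DirectSum.lof A _ (fun q => PrimeSubquotient q.1.asIdeal X) q (z q) := by
  induction z using DirectSum.induction_on with
  | zero => exact ⟨1, (Ideal.ne_top_iff_one _).1 q.1.2.ne_top, by simp⟩
  | of q' t =>
    rcases eq_or_ne q' q with rfl | hne
    · exact ⟨1, (Ideal.ne_top_iff_one _).1 q'.1.2.ne_top, by rw [DirectSum.of_eq_same]; rfl⟩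
    · obtain ⟨n, hn⟩ := PrimeSubquotient.isPowTorsion X q'.1.asIdeal t
      obtain ⟨s, hs, hsq⟩ := SetLike.not_le_iff_exists.1
        (mt q.1.2.le_of_pow_le (h.not_le hne) : ¬ q'.1.asIdeal ^ n ≤ q.1.asIdeal)
      refine ⟨s, hsq, ?_⟩
      rw [DirectSum.of_eq_of_ne _ _ _ hne.symm, map_zero, smul_zero,
        ← DirectSum.lof_eq_of A, ← map_smul, hn s hs, map_zero]
  | add x y hx hy =>
    obtain ⟨s, hs, hsx⟩ := hx
    obtain ⟨t, ht, hty⟩ := hy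
    refine ⟨s * t, fun hst => (q.1.2.mem_or_mem hst).elim hs ht, ?_⟩
    rw [DirectSum.add_apply, map_add, smul_add, smul_add]
    congr 1
    · rw [mul_comm, mul_smul, hsx, mul_smul]
    · rw [mul_smul, hty, mul_smul]

lemma isDirectSum_ι {X : Type u} [AddCommGroup X] [Module A X] [Module.Injective A X]
    (h : IsStratum W W') : IsDirectSum (h.ι X) := by
  classical
  refine .of_bijective ⟨(injective_iff_map_eq_zero _).2 fun z hz => DFinsupp.ext fun q => ?_,
    fun t => ?_⟩
  · obtain ⟨s, hs, hsz⟩ := h.exists_smul_eq_smul_lof q z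
    have hzero := congr(DirectSum.toModule A _ _ (h.ι X) $hsz)
    rw [map_smul, hz, smul_zero, map_smul, DirectSum.toModule_lof, ← map_smul] at hzero
    have hszero : s • z q = 0 := h.ι_injective q (hzero.symm.trans (map_zero _).symm)
    exact PrimeSubquotient.smul_injective hs (hszero.trans (smul_zero s).symm)
  · obtain ⟨x, hx, rfl⟩ := SupportSubquotient.exists_mk_eq t
    suffices hle : supportedIn W X ≤ ((LinearMap.range (DirectSum.toModule A _ _ (h.ι X))).comap
        (Submodule.mkQ _)).map (supportedIn W X).subtype by
      obtain ⟨_, hy, rfl⟩ := hle hx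
      exact hy
    refine (supportedIn_le_iSup W).trans (iSup_le fun p x hxp => ?_)
    have hxW := supportedIn_mono (fun _ hp => h.isUpperSet hp p.2) hxp
    refine ⟨⟨x, hxW⟩, ?_, rfl⟩
    change SupportSubquotient.mk W' x hxW ∈ LinearMap.range _
    by_cases hp : p.1 ∈ W'
    · rw [SupportSubquotient.mk_eq_zero.2
        (supportedIn_mono (fun _ hp' => h.isUpperSet' hp' hp) hxp)]
      exact zero_mem _
    · refine ⟨DirectSum.lof A _ _ ⟨p.1, p.2, hp⟩ (SupportSubquotient.mk _ x hxp), ?_⟩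
      rw [DirectSum.toModule_lof]
      rfl

end IsStratum

end IsStratum

/-! ### Vanishing of Ext -/

/-- A module regarded as a complex concentrated in degree `0`. -/
noncomputable abbrev singleZero {A : Type u} [CommRing A] (M : ModuleCat.{u} A) :
    CochainComplex (ModuleCat.{u} A) ℤ :=
  (HomologicalComplex.single (ModuleCat.{u} A) (ComplexShape.up ℤ) 0).obj M

section ExtVanishes

open DerivedCategory Pretriangulated

variable {A : Type u} [CommRing A] [HasDerivedCategory (ModuleCat.{u} A)]

/-- The vanishing of `Ext^r(K, N) = Hom_{D(A)}(K, N[r])`. -/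
def ExtVanishes (N : ModuleCat.{u} A) (K : CochainComplex (ModuleCat.{u} A) ℤ) (r : ℤ) : Prop :=
  ∀ f : Q.obj K ⟶ (Q.obj (singleZero N))⟦r⟧, f = 0

namespace ExtVanishes

variable {N : ModuleCat.{u} A} {K L : CochainComplex (ModuleCat.{u} A) ℤ} {r s : ℤ}

lemma of_iso (h : ExtVanishes N K r) (e : Q.obj K ≅ Q.obj L) : ExtVanishes N L r := fun f => by
  rw [← cancel_epi e.hom, h (e.hom ≫ f), comp_zero]

lemma of_isZero (hK : IsZero K) : ExtVanishes N K r :=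
  fun _ => (Q.map_isZero hK).eq_of_src _ _

lemma shift_hom_eq_zero (h : ExtVanishes N K s) (n : ℤ) (hs : s + n = r)
    (f : (Q.obj K)⟦n⟧ ⟶ (Q.obj (singleZero N))⟦r⟧) :
    f = 0 := by
  let α := (shiftFunctorAdd' (DerivedCategory (ModuleCat.{u} A)) s n r hs).hom.app
    (Q.obj (singleZero N))
  obtain ⟨g, hg⟩ := (shiftFunctor (DerivedCategory (ModuleCat.{u} A)) n).map_surjective (f ≫ α)
  rw [← cancel_mono α, ← hg, h g, Functor.map_zero, zero_comp]

variable {S : ShortComplex (CochainComplex (ModuleCat.{u} A) ℤ)}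

lemma exists_eq_map_g_comp (h : ExtVanishes N S.X₁ r) (hS : S.ShortExact)
    (f : Q.obj S.X₂ ⟶ (Q.obj (singleZero N))⟦r⟧) :
    ∃ g, f = Q.map S.g ≫ g :=
  Triangle.yoneda_exact₂ _ (triangleOfSES_distinguished hS) f (h _)

lemma exists_eq_map_f_comp (h : ExtVanishes N S.X₃ (r + 1)) (hS : S.ShortExact)
    (f : Q.obj S.X₁ ⟶ (Q.obj (singleZero N))⟦r⟧) :
    ∃ g, f = Q.map S.f ≫ g :=
  Triangle.yoneda_exact₂ _ (inv_rot_of_distTriang _ (triangleOfSES_distinguished hS)) f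
    (h.shift_hom_eq_zero (-1) (by omega) _)

lemma X₂_of_shortExact (h₁ : ExtVanishes N S.X₁ r) (h₃ : ExtVanishes N S.X₃ r)
    (hS : S.ShortExact) : ExtVanishes N S.X₂ r := fun f => by
  obtain ⟨g, rfl⟩ := h₁.exists_eq_map_g_comp hS f
  rw [h₃ g, comp_zero]

lemma X₁_of_shortExact (h₂ : ExtVanishes N S.X₂ r) (h₃ : ExtVanishes N S.X₃ (r + 1))
    (hS : S.ShortExact) : ExtVanishes N S.X₁ r := fun f => by
  obtain ⟨g, rfl⟩ := h₃.exists_eq_map_f_comp hS f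
  rw [h₂ g, comp_zero]

lemma X₃_of_shortExact (h₁ : ExtVanishes N S.X₁ (r - 1)) (h₂ : ExtVanishes N S.X₂ r)
    (hS : S.ShortExact) : ExtVanishes N S.X₃ r := fun f => by
  obtain ⟨g, hg⟩ := Triangle.yoneda_exact₃ _ (triangleOfSES_distinguished hS) f (h₂ _)
  rw [hg]
  exact (congrArg _ (h₁.shift_hom_eq_zero 1 (by omega) g)).trans comp_zero

end ExtVanishes

end ExtVanishes

section IsKInjective

open DerivedCategory

variable {C : Type*} [Category* C] [Abelian C] [HasDerivedCategory C] {K L : CochainComplex C ℤ}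
  [L.IsKInjective]

lemma exists_Q_map_eq_of_isKInjective (f : Q.obj K ⟶ Q.obj L) : ∃ g : K ⟶ L, Q.map g = f := by
  obtain ⟨g, hg⟩ := (CochainComplex.IsKInjective.Qh_map_bijective _ L).surjective
    ((quotientCompQhIso C).hom.app K ≫ f ≫ (quotientCompQhIso C).inv.app L)
  obtain ⟨g, rfl⟩ := (HomotopyCategory.quotient _ _).map_surjective g
  refine ⟨g, ?_⟩
  rw [← cancel_epi ((quotientCompQhIso C).hom.app K), ← quotientCompQhIso_hom_naturality, hg]
  simp

lemma nonempty_homotopy_zero_of_Q_map_eq_zero {g : K ⟶ L} (hg : Q.map g = 0) :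
    Nonempty (Homotopy g 0) := by
  refine ⟨HomotopyCategory.homotopyOfEq _ _
    ((CochainComplex.IsKInjective.Qh_map_bijective _ L).injective ?_)⟩
  rw [Functor.map_zero, Functor.map_zero, ← cancel_mono ((quotientCompQhIso C).hom.app L),
    quotientCompQhIso_hom_naturality, hg, comp_zero, zero_comp]

end IsKInjective

section Coproduct

open DerivedCategory CochainComplex.HomComplex

variable {A : Type u} [CommRing A]

lemma nonempty_homotopy_zero_of_isDirectSum {I : Type*} {K : I → CochainComplex (ModuleCat.{u} A) ℤ}
    {L E : CochainComplex (ModuleCat.{u} A) ℤ} {α : ∀ i, K i ⟶ L}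
    (hα : ∀ n, IsDirectSum fun i => ((α i).f n).hom) {g : L ⟶ E}
    (h : ∀ i, Nonempty (Homotopy (α i ≫ g) 0)) : Nonempty (Homotopy g 0) := by
  have hex i : ∃ z : Cochain (K i) E (-1), Cochain.ofHom (α i ≫ g) = δ (-1) 0 z := by
    obtain ⟨z, hz⟩ := Cochain.equivHomotopy _ _ (h i).some
    exact ⟨z, by rw [hz, Cochain.ofHom_zero, add_zero]⟩
  choose z hz using hex
  choose w hw using fun p q (_ : p + -1 = q) =>
    (hα p).exists_desc fun i => ((z i).v p q ‹_›).hom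
  let W : Cochain L E (-1) := Cochain.mk fun p q hpq => ModuleCat.ofHom (w p q hpq)
  have hW (i) : (Cochain.ofHom (α i)).comp W (zero_add _) = z i := by
    ext p q hpq x
    rw [Cochain.zero_cochain_comp_v, Cochain.ofHom_v]
    exact hw p q hpq i x
  have hδ (i) : (Cochain.ofHom (α i)).comp (Cochain.ofHom g) (zero_add _) =
      (Cochain.ofHom (α i)).comp (δ (-1) 0 W) (zero_add _) := by
    rw [← δ_ofHom_comp, hW, ← Cochain.ofHom_comp, hz]
  refine ⟨(Cochain.equivHomotopy _ _).symm ⟨W, ?_⟩⟩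
  rw [Cochain.ofHom_zero, add_zero]
  ext p : 1
  refine ModuleCat.hom_ext ((hα p).hom_ext fun i x => ?_)
  have := Cochain.congr_v (hδ i) p p (add_zero p)
  rw [Cochain.zero_cochain_comp_v, Cochain.zero_cochain_comp_v, Cochain.ofHom_v] at this
  exact congr(($this).hom x)

variable [HasDerivedCategory (ModuleCat.{u} A)] {N : ModuleCat.{u} A} {r : ℤ}

/-- The isomorphism from `M` to its injective resolution in the derived category. -/
noncomputable def singleIsoInjectiveResolution (M : ModuleCat.{u} A) :
    Q.obj (singleZero M) ≅ Q.obj (injectiveResolution M).cochainComplex :=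
  have : IsIso (Q.map (X := (CochainComplex.singleFunctor _ 0).obj M)
    (injectiveResolution M).ι') := inferInstance
  @asIso _ _ _ _ _ this

lemma ExtVanishes.of_isDirectSum {I : Type*} {K : I → CochainComplex (ModuleCat.{u} A) ℤ}
    {L : CochainComplex (ModuleCat.{u} A) ℤ} (α : ∀ i, K i ⟶ L)
    (hα : ∀ n, IsDirectSum fun i => ((α i).f n).hom) (h : ∀ i, ExtVanishes N (K i) r) :
    ExtVanishes N L r := by
  let J := (injectiveResolution N).cochainComplex
  let e := (shiftFunctor _ r).mapIso (singleIsoInjectiveResolution N) ≪≫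
    (Q.commShiftIso r).symm.app J
  intro f
  obtain ⟨g, hg⟩ := exists_Q_map_eq_of_isKInjective (L := J⟦r⟧) (f ≫ e.hom)
  have hαg (i) : Q.map (α i ≫ g) = 0 := by
    rw [Functor.map_comp, hg, ← Category.assoc, h i (Q.map (α i) ≫ f), zero_comp]
  obtain ⟨hgz⟩ := nonempty_homotopy_zero_of_isDirectSum hα fun i =>
    nonempty_homotopy_zero_of_Q_map_eq_zero (hαg i)
  rw [← cancel_mono e.hom, ← hg, zero_comp, Q_map_eq_of_homotopy _ hgz, Functor.map_zero]

end Coproduct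

section Termwise

variable {A : Type u} [CommRing A] {G₁ G₂ G₃ : ModuleCat.{u} A ⥤ ModuleCat.{u} A}
  [G₁.Additive] [G₂.Additive] [G₃.Additive]

/-- The complex obtained by applying the additive functor `G` to each term of `J`. -/
abbrev termwise (G : ModuleCat.{u} A ⥤ ModuleCat.{u} A) [G.Additive]
    (J : CochainComplex (ModuleCat.{u} A) ℤ) : CochainComplex (ModuleCat.{u} A) ℤ :=
  (G.mapHomologicalComplex (ComplexShape.up ℤ)).obj J

/-- The map of complexes whose components are those of the natural transformation `a`. -/
abbrev termwiseMap (a : G₁ ⟶ G₂) (J : CochainComplex (ModuleCat.{u} A) ℤ) :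
    termwise G₁ J ⟶ termwise G₂ J :=
  (NatTrans.mapHomologicalComplex a (ComplexShape.up ℤ)).app J

/-- Exactness of `0 → G₁ X → G₂ X → G₃ X → 0` for all injective modules `X`. -/
structure IsShortExactOnInjectives (a : G₁ ⟶ G₂) (b : G₂ ⟶ G₃) : Prop where
  injective (X : ModuleCat.{u} A) [Module.Injective A X] : Injective (a.app X).hom
  exact (X : ModuleCat.{u} A) [Module.Injective A X] : Exact (a.app X).hom (b.app X).hom
  surjective (X : ModuleCat.{u} A) [Module.Injective A X] : Surjective (b.app X).hom

namespace IsShortExactOnInjectives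

variable {a : G₁ ⟶ G₂} {b : G₂ ⟶ G₃} (h : IsShortExactOnInjectives a b)
  (J : CochainComplex (ModuleCat.{u} A) ℤ) [∀ n, Module.Injective A (J.X n)]

/-- The short complex of complexes obtained by applying the functors termwise. -/
abbrev shortComplex : ShortComplex (CochainComplex (ModuleCat.{u} A) ℤ) :=
  .mk (termwiseMap a J) (termwiseMap b J) <| by
    ext n x
    exact (h.exact (J.X n)).apply_apply_eq_zero x

lemma shortExact : (h.shortComplex J).ShortExact := by
  refine HomologicalComplex.shortExact_of_degreewise_shortExact _ fun n => .mk' ?_ ?_ ?_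
  · rw [ShortComplex.ShortExact.moduleCat_exact_iff_function_exact]
    exact h.exact (J.X n)
  · rw [ModuleCat.mono_iff_injective]
    exact h.injective (J.X n)
  · rw [ModuleCat.epi_iff_surjective]
    exact h.surjective (J.X n)

end IsShortExactOnInjectives

end Termwise

section SupportTensor

variable {A : Type u} [CommRing A] {W W' W'' W₁ W₁' W₂ W₂' W₃ W₃' : Set (PrimeSpectrum A)}
  {S S' S'' : Type u} [AddCommGroup S] [Module A S] [AddCommGroup S'] [Module A S']
  [AddCommGroup S''] [Module A S'']

/-- The functor sending `X` to `(Γ_W X / Γ_W' X) ⊗ S`, where `Γ_W` denotes `supportedIn W`. -/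
def supportTensor (W W' : Set (PrimeSpectrum A)) (S : Type u) [AddCommGroup S] [Module A S] :
    ModuleCat.{u} A ⥤ ModuleCat.{u} A where
  obj X := ModuleCat.of A (SupportSubquotient W W' X ⊗[A] S)
  map f := ModuleCat.ofHom ((SupportSubquotient.map le_rfl le_rfl f.hom).rTensor S)
  map_id X := by
    rw [ModuleCat.hom_id, SupportSubquotient.map_id, LinearMap.rTensor_id, ModuleCat.ofHom_id]
  map_comp f g := by
    rw [← ModuleCat.ofHom_comp, ← LinearMap.rTensor_comp, SupportSubquotient.map_comp_map,
      ModuleCat.hom_comp]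

instance : (supportTensor W W' S).Additive where
  map_add {_ _ f g} := ModuleCat.hom_ext <|
    (congrArg (LinearMap.rTensor S) (SupportSubquotient.map_add le_rfl le_rfl f.hom g.hom)).trans
      (LinearMap.rTensor_add ..)

/-- Functoriality of `supportTensor` in the sets of primes and in the module. -/
def supportTensorMap (h : W₁ ⊆ W₂) (h' : W₁' ⊆ W₂') (f : S →ₗ[A] S') :
    supportTensor W₁ W₁' S ⟶ supportTensor W₂ W₂' S' where
  app X := ModuleCat.ofHom (TensorProduct.map (SupportSubquotient.map h h' LinearMap.id) f)
  naturality _ _ g := ModuleCat.hom_ext <| by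
    simp only [supportTensor, ModuleCat.hom_comp, ModuleCat.hom_ofHom, LinearMap.rTensor,
      ← TensorProduct.map_comp, SupportSubquotient.map_comp_map, LinearMap.comp_id,
      LinearMap.id_comp]
    rfl

lemma supportTensorMap_comp (h : W₁ ⊆ W₂) (h' : W₁' ⊆ W₂') (f : S →ₗ[A] S') (k : W₂ ⊆ W₃)
    (k' : W₂' ⊆ W₃') (g : S' →ₗ[A] S'') :
    supportTensorMap h h' f ≫ supportTensorMap k k' g =
      supportTensorMap (h.trans k) (h'.trans k') (g ∘ₗ f) := by
  ext X : 2
  refine ModuleCat.hom_ext (TensorProduct.ext' fun t _ => ?_)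
  obtain ⟨x, hx, rfl⟩ := SupportSubquotient.exists_mk_eq t
  rfl

lemma supportTensorMap_app_of_eq (f : S →ₗ[A] S') (X : ModuleCat.{u} A) :
    ((supportTensorMap (le_refl W) (le_refl W') f).app X).hom =
      f.lTensor (SupportSubquotient W W' X) := by
  rw [LinearMap.lTensor, ← SupportSubquotient.map_id]
  rfl

lemma isShortExactOnInjectives_support (h : W' ⊆ W) (h' : W'' ⊆ W')
    (hinj : ∀ (X : ModuleCat.{u} A) [Module.Injective A X], Injective
      ((SupportSubquotient.map h le_rfl LinearMap.id :
        SupportSubquotient W' W'' X →ₗ[A] SupportSubquotient W W'' X).rTensor S)) :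
    IsShortExactOnInjectives (supportTensorMap h (le_refl W'') (LinearMap.id (M := S)))
      (supportTensorMap (le_refl W) h' LinearMap.id) where
  injective X _ := hinj X
  exact X _ := rTensor_exact S (SupportSubquotient.map_exact X h h')
    (SupportSubquotient.map_surjective X W h')
  surjective X _ := LinearMap.rTensor_surjective S (SupportSubquotient.map_surjective X W h')

lemma isShortExactOnInjectives_module {f : S →ₗ[A] S'} {g : S' →ₗ[A] S''} (hfg : Exact f g)
    (hg : Surjective g)
    (hinj : ∀ (X : ModuleCat.{u} A) [Module.Injective A X],
      Injective (f.lTensor (SupportSubquotient W W' X))) :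
    IsShortExactOnInjectives (supportTensorMap (le_refl W) (le_refl W') f)
      (supportTensorMap (le_refl W) (le_refl W') g) where
  injective X _ := by
    rw [supportTensorMap_app_of_eq]
    exact hinj X
  exact X _ := by
    rw [supportTensorMap_app_of_eq, supportTensorMap_app_of_eq]
    exact lTensor_exact _ hfg hg
  surjective X _ := by
    rw [supportTensorMap_app_of_eq]
    exact LinearMap.lTensor_surjective _ hg

/-- The complex `(Γ_W J / Γ_W' J) ⊗ S`. -/
abbrev supportComplex (W W' : Set (PrimeSpectrum A)) (S : Type u) [AddCommGroup S] [Module A S]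
    (J : CochainComplex (ModuleCat.{u} A) ℤ) : CochainComplex (ModuleCat.{u} A) ℤ :=
  termwise (supportTensor W W' S) J

variable [HasDerivedCategory (ModuleCat.{u} A)] {N : ModuleCat.{u} A} {r : ℤ}
  {J : CochainComplex (ModuleCat.{u} A) ℤ} [∀ n, Module.Injective A (J.X n)]

lemma ExtVanishes.termwise_of_isDirectSum {I : Type*}
    {G : ModuleCat.{u} A ⥤ ModuleCat.{u} A} [G.Additive]
    {F : I → ModuleCat.{u} A ⥤ ModuleCat.{u} A} [∀ i, (F i).Additive] (α : ∀ i, F i ⟶ G)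
    (hα : ∀ (X : ModuleCat.{u} A) [Module.Injective A X],
      IsDirectSum fun i => ((α i).app X).hom)
    (h : ∀ i, ExtVanishes N (termwise (F i) J) r) : ExtVanishes N (termwise G J) r :=
  .of_isDirectSum (fun i => termwiseMap (α i) J) (fun n => hα (J.X n)) h

lemma ExtVanishes.supportComplex_of_finsuppTmul_bijective {I : Type*} (s : I → S)
    (hs : ∀ (X : ModuleCat.{u} A) [Module.Injective A X],
      Bijective (finsuppTmul A s (SupportSubquotient W W' X)))
    (h : ExtVanishes N (supportComplex W W' A J) r) :
    ExtVanishes N (supportComplex W W' S J) r := by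
  refine .termwise_of_isDirectSum
    (fun i => supportTensorMap le_rfl le_rfl (LinearMap.toSpanSingleton A S (s i)))
    (fun X _ => ?_) fun _ => h
  simp only [supportTensorMap_app_of_eq]
  exact .lTensor_toSpanSingleton (hs X)

lemma ExtVanishes.supportComplex_of_free [Module.Free A S]
    (h : ExtVanishes N (supportComplex W W' A J) r) :
    ExtVanishes N (supportComplex W W' S J) r := by
  let b := Module.Free.chooseBasis A S
  refine .supportComplex_of_finsuppTmul_bijective b (fun X _ => ?_) h
  convert (TensorProduct.equivFinsuppOfBasisRight b).symm.bijective using 1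
  ext x
  simp [finsuppTmul, Finsupp.sum]

end SupportTensor

/-! ### Complexes supported in closed sets -/

section Localization

open Polynomial

lemma mulLeft_C_mul_X_sub_one_injective {A : Type*} [CommRing A] (x : A) :
    Injective (LinearMap.mulLeft A (C x * X - 1 : A[X])) := by
  have hreg : (C x * X - 1 : A[X]) ∈ nonZeroDivisors A[X] := by
    by_contra hmem
    obtain ⟨a, ha0, ha⟩ := Polynomial.notMem_nonZeroDivisors_iff.1 hmem
    exact ha0 (by simpa using congr(($ha).coeff 0))
  exact fun p q hpq => mul_cancel_left_mem_nonZeroDivisors hreg |>.1 hpq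

/-- The surjection `A[X] → A_x` sending `X` to `1 / x`. -/
noncomputable def polynomialToAway {A : Type*} [CommRing A] (x : A) :
    A[X] →ₗ[A] Localization.Away x :=
  (Localization.awayEquivAdjoin x).symm.toLinearMap ∘ₗ (AdjoinRoot.mkₐ (C x * X - 1)).toLinearMap

lemma polynomialToAway_surjective {A : Type*} [CommRing A] (x : A) :
    Surjective (polynomialToAway x) :=
  (Localization.awayEquivAdjoin x).symm.surjective.comp AdjoinRoot.mk_surjective

lemma exact_mulLeft_polynomialToAway {A : Type*} [CommRing A] (x : A) :
    Exact (LinearMap.mulLeft A (C x * X - 1 : A[X])) (polynomialToAway x) := by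
  intro p
  change (Localization.awayEquivAdjoin x).symm (AdjoinRoot.mk _ p) = 0 ↔ _
  rw [EmbeddingLike.map_eq_zero_iff, AdjoinRoot.mk_eq_zero, dvd_def]
  simp only [Set.mem_range, LinearMap.mulLeft_apply, eq_comm]

variable {A : Type*} [CommRing A] {T : Type*} [AddCommGroup T] [Module A T]

lemma isLocalizedModule_flip_mk_one (S : Submonoid A) :
    IsLocalizedModule S ((TensorProduct.mk A T (Localization S)).flip 1) := by
  have := (isLocalizedModule_iff_isBaseChange S (Localization S)
    (TensorProduct.mk A (Localization S) T 1)).2 (TensorProduct.isBaseChange A T (Localization S))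
  exact .of_linearEquiv S (TensorProduct.mk A (Localization S) T 1)
    (TensorProduct.comm A (Localization S) T)

lemma tmul_one_surjective_of_injective {A : Type u} [CommRing A] [IsNoetherianRing A] {T : Type u}
    [AddCommGroup T] [Module A T] [Module.Injective A T] (x : A) :
    Surjective ((TensorProduct.mk A T (Localization.Away x)).flip 1) := by
  let S := Submonoid.powers x
  let φ := (TensorProduct.mk A T (Localization.Away x)).flip 1
  have : IsLocalizedModule S φ := isLocalizedModule_flip_mk_one S
  intro w
  obtain ⟨⟨t, s⟩, hts⟩ := IsLocalizedModule.surj S φ w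
  obtain ⟨n, y, hy⟩ := exists_pow_succ_smul_eq (s : A) t
  refine ⟨y, IsLocalizedModule.smul_injective φ (s ^ (n + 1)) ?_⟩
  calc (s ^ (n + 1) : A) • φ y = (s ^ n : A) • φ t := by rw [← map_smul, hy, map_smul]
    _ = (s ^ n : A) • (s : A) • w := congrArg _ hts.symm
    _ = (s ^ (n + 1) : A) • w := by rw [smul_smul, pow_succ]

end Localization

section PrimesAbove

variable {A : Type u} [CommRing A] [IsNoetherianRing A] {W : Set (PrimeSpectrum A)}

omit [IsNoetherianRing A] in
lemma isShortExactOnInjectives_mulLeft_polynomialToAway (x : A) :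
    IsShortExactOnInjectives
      (supportTensorMap (le_refl W) (le_refl ∅)
        (LinearMap.mulLeft A (.C x * .X - 1 : Polynomial A)))
      (supportTensorMap le_rfl le_rfl (polynomialToAway x)) :=
  isShortExactOnInjectives_module (exact_mulLeft_polynomialToAway x)
    (polynomialToAway_surjective x) fun _ _ =>
      LinearMap.lTensor_injective_of_exact_of_flat _ (polynomialToAway_surjective x) _
        (mulLeft_C_mul_X_sub_one_injective x) (exact_mulLeft_polynomialToAway x) _

lemma mem_supportedIn_primesAbove_span_singleton {X : Type*} [AddCommGroup X] [Module A X] {x : A}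
    {y : X} : y ∈ supportedIn (primesAbove (Ideal.span {x})) X ↔ ∃ n : ℕ, x ^ n • y = 0 := by
  simp only [mem_supportedIn_primesAbove, Ideal.span_singleton_pow, Ideal.mem_span_singleton',
    forall_exists_index, forall_apply_eq_imp_iff, mul_smul]
  refine exists_congr fun n => ⟨fun h => by simpa using h 1, fun h a => by rw [h, smul_zero]⟩

lemma exact_map_flip_mk_one (x : A) (X : Type*) [AddCommGroup X] [Module A X] :
    Exact (SupportSubquotient.map (Set.inter_subset_left (s := W)) (le_refl ∅)
        (LinearMap.id : X →ₗ[A] X) : SupportSubquotient (W ∩ primesAbove (.span {x})) ∅ X →ₗ[A] _)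
      ((TensorProduct.mk A (SupportSubquotient W ∅ X) (Localization.Away x)).flip 1) := by
  intro t
  have := isLocalizedModule_flip_mk_one (T := SupportSubquotient W ∅ X) (Submonoid.powers x)
  refine (IsLocalizedModule.eq_zero_iff (Submonoid.powers x)
    ((TensorProduct.mk A _ (Localization.Away x)).flip 1)).trans ?_
  rw [← SupportSubquotient.map_exact X Set.inter_subset_left (Set.empty_subset _) t]
  obtain ⟨y, hy, rfl⟩ := SupportSubquotient.exists_mk_eq t
  rw [SupportSubquotient.map_mk, SupportSubquotient.mk_eq_zero, supportedIn_inter,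
    Submodule.mem_inf, mem_supportedIn_primesAbove_span_singleton]
  simp [hy, Submonoid.mem_powers_iff, Submonoid.smul_def, SupportSubquotient.smul_mk,
    SupportSubquotient.mk_eq_zero, supportedIn_empty]

lemma isShortExactOnInjectives_primesAbove_singleton (x : A) :
    IsShortExactOnInjectives
      (supportTensorMap (Set.inter_subset_left (s := W) (t := primesAbove (Ideal.span {x})))
        (le_refl ∅) (LinearMap.id (M := A)))
      (supportTensorMap (le_refl W) (le_refl ∅) (Algebra.linearMap A (Localization.Away x))) where
  injective X _ := Module.Flat.rTensor_preserves_injective_linearMap _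
    (SupportSubquotient.map_injective X Set.inter_subset_left le_rfl fun p hp => hp.2)
  exact X _ := by
    rw [supportTensorMap_app_of_eq]
    refine Exact.of_ladder_linearEquiv_of_exact
      (g₁₂ := (SupportSubquotient.map Set.inter_subset_left le_rfl LinearMap.id).rTensor A)
      (g₂₃ := (Algebra.linearMap A (Localization.Away x)).lTensor _)
      (e₁ := (TensorProduct.rid A _).symm) (e₂ := (TensorProduct.rid A _).symm)
      (e₃ := .refl A _) ?_ ?_ (exact_map_flip_mk_one x X)
    · rfl
    · refine LinearMap.ext fun t => ?_
      exact congrArg (TensorProduct.mk A (SupportSubquotient W ∅ X) (Localization.Away x) t)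
        (map_one (algebraMap A _))
  surjective X _ := by
    rw [supportTensorMap_app_of_eq]
    refine fun w => ?_
    obtain ⟨t, rfl⟩ := tmul_one_surjective_of_injective (T := SupportSubquotient W ∅ X) x w
    exact ⟨t ⊗ₜ 1, congrArg (TensorProduct.mk A (SupportSubquotient W ∅ X) (Localization.Away x) t)
      (map_one (algebraMap A _))⟩

variable [HasDerivedCategory (ModuleCat.{u} A)] {N : ModuleCat.{u} A} {n : ℤ}
  {J : CochainComplex (ModuleCat.{u} A) ℤ} [∀ n, Module.Injective A (J.X n)]

lemma extVanishes_inter_primesAbove_singleton (x : A)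
    (h : ∀ r > n, ExtVanishes N (supportComplex W ∅ A J) r) :
    ∀ r > n, ExtVanishes N (supportComplex (W ∩ primesAbove (Ideal.span {x})) ∅ A J) r := by
  intro r hr
  have hAway : ExtVanishes N (supportComplex W ∅ (Localization.Away x) J) (r + 1) := by
    refine .X₃_of_shortExact ?_ (.supportComplex_of_free (h (r + 1) (by omega)))
      ((isShortExactOnInjectives_mulLeft_polynomialToAway x).shortExact J)
    rw [add_sub_cancel_right]
    exact .supportComplex_of_free (h r hr)
  exact .X₁_of_shortExact (h r hr) hAway
    ((isShortExactOnInjectives_primesAbove_singleton x).shortExact J)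

lemma extVanishes_primesAbove (h : ∀ r > n, ExtVanishes N (supportComplex Set.univ ∅ A J) r)
    (I : Ideal A) : ∀ r > n, ExtVanishes N (supportComplex (primesAbove I) ∅ A J) r := by
  obtain ⟨s, rfl⟩ := IsNoetherian.noetherian I
  induction s using Finset.cons_induction with
  | empty =>
    convert h
    ext p
    simp
  | cons a s ha ih =>
    have hinter : primesAbove (Ideal.span (s.cons a ha : Set A)) =
        primesAbove (Ideal.span (s : Set A)) ∩ primesAbove (Ideal.span {a}) := by
      ext p
      rw [Finset.coe_cons, Ideal.span_insert]
      exact (sup_le_iff (α := Ideal A)).trans and_comm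
    rw [hinter]
    exact extVanishes_inter_primesAbove_singleton a ih

end PrimesAbove

/-! ### The filtration by height -/

section HeightFiltration

variable {A : Type u} [CommRing A]

/-- The set of primes of height at least `m`. -/
def primesOfHeightGE (A : Type u) [CommRing A] (m : ℕ) : Set (PrimeSpectrum A) :=
  {p | (m : ℕ∞) ≤ p.asIdeal.height}

lemma mem_primesOfHeightGE {m : ℕ} {p : PrimeSpectrum A} :
    p ∈ primesOfHeightGE A m ↔ (m : ℕ∞) ≤ p.asIdeal.height := Iff.rfl

lemma primesOfHeightGE_isUpperSet (m : ℕ) : IsUpperSet (primesOfHeightGE A m) :=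
  fun _ _ hpq hp => le_trans (mem_primesOfHeightGE.1 hp) (Ideal.height_mono hpq)

lemma primesOfHeightGE_succ_subset (m : ℕ) : primesOfHeightGE A (m + 1) ⊆ primesOfHeightGE A m :=
  fun _ hp => le_trans (Nat.cast_le.2 m.le_succ) (mem_primesOfHeightGE.1 hp)

lemma primesOfHeightGE_zero : primesOfHeightGE A 0 = Set.univ :=
  Set.eq_univ_of_forall fun _ => mem_primesOfHeightGE.2 (by simp)

lemma primesOfHeightGE_eq_empty {d : ℕ} (hd : ringKrullDim A ≤ d) :
    primesOfHeightGE A (d + 1) = ∅ := by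
  refine Set.eq_empty_of_forall_notMem fun p hp => ?_
  have hle : p.asIdeal.height ≤ (d : ℕ∞) := by
    exact_mod_cast (Ideal.height_le_ringKrullDim_of_ne_top p.2.ne_top).trans hd
  exact absurd (Nat.cast_le.1 ((mem_primesOfHeightGE.1 hp).trans hle)) d.lt_irrefl

variable [IsNoetherianRing A] {W W' W'' : Set (PrimeSpectrum A)}

lemma primesStrictlyAbove_subset_primesOfHeightGE_succ {m : ℕ} {q : PrimeSpectrum A}
    (hq : q ∈ primesOfHeightGE A m) :
    primesStrictlyAbove q.asIdeal ⊆ primesOfHeightGE A (m + 1) := fun p hp => by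
  have hlt : (m : ℕ∞) < p.asIdeal.height :=
    lt_of_le_of_lt hq (Ideal.height_strict_mono_of_isPrime_of_isPrime hp)
  exact_mod_cast Order.add_one_le_of_lt hlt

lemma isStratum_inter_primesOfHeightGE (hW : IsUpperSet W) (m : ℕ) :
    IsStratum (W ∩ primesOfHeightGE A m) (W ∩ primesOfHeightGE A (m + 1)) where
  isUpperSet := hW.inter (primesOfHeightGE_isUpperSet m)
  isUpperSet' := hW.inter (primesOfHeightGE_isUpperSet _)
  primesStrictlyAbove_subset _ hq _ := Set.subset_inter (fun _ hp => hW (le_of_lt hp) hq.1)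
    (primesStrictlyAbove_subset_primesOfHeightGE_succ hq.2)

lemma isStratum_primesOfHeightGE (m : ℕ) :
    IsStratum (primesOfHeightGE A m) (primesOfHeightGE A (m + 1)) := by
  simpa only [Set.univ_inter] using isStratum_inter_primesOfHeightGE isUpperSet_univ m

variable {S : Type u} [AddCommGroup S] [Module A S]

omit [IsNoetherianRing A] in
lemma rTensor_supportSubquotientMap_injective [Module.Flat A S] (h : W' ⊆ W) (X : Type*)
    [AddCommGroup X] [Module A X] :
    Injective ((SupportSubquotient.map h (le_refl W'') LinearMap.id :
      SupportSubquotient W' W'' X →ₗ[A] SupportSubquotient W W'' X).rTensor S) :=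
  Module.Flat.rTensor_preserves_injective_linearMap _
    (SupportSubquotient.map_injective X h le_rfl fun _ hp => hp.2)

omit [IsNoetherianRing A] in
lemma isShortExactOnInjectives_support_of_flat [Module.Flat A S] (h : W' ⊆ W) (h' : W'' ⊆ W') :
    IsShortExactOnInjectives (supportTensorMap h (le_refl W'') (LinearMap.id (M := S)))
      (supportTensorMap (le_refl W) h' LinearMap.id) :=
  isShortExactOnInjectives_support h h' fun X _ => rTensor_supportSubquotientMap_injective h X

variable [HasDerivedCategory (ModuleCat.{u} A)] {N : ModuleCat.{u} A}
  {J : CochainComplex (ModuleCat.{u} A) ℤ} [∀ n, Module.Injective A (J.X n)] {r : ℤ} {d : ℕ}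

lemma extVanishes_of_isStratum (h : IsStratum W W')
    (hV : ∀ q ∈ W, q ∉ W' → ExtVanishes N
      (supportComplex (primesAbove q.asIdeal) (primesStrictlyAbove q.asIdeal) S J) r) :
    ExtVanishes N (supportComplex W W' S J) r :=
  .termwise_of_isDirectSum
    (F := fun q : (W \ W' : Set (PrimeSpectrum A)) =>
      supportTensor (primesAbove q.1.asIdeal) (primesStrictlyAbove q.1.asIdeal) S)
    (fun q => supportTensorMap (fun _ hp => h.isUpperSet hp q.2.1)
      (h.primesStrictlyAbove_subset _ q.2.1 q.2.2) LinearMap.id)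
    (fun _ _ => h.isDirectSum_ι.rTensor S) fun q => hV q.1 q.2.1 q.2.2

lemma extVanishes_of_isUpperSet [Module.Flat A S] (hd : ringKrullDim A ≤ d) (hW : IsUpperSet W)
    (hV : ∀ q ∈ W, ExtVanishes N
      (supportComplex (primesAbove q.asIdeal) (primesStrictlyAbove q.asIdeal) S J) r) :
    ExtVanishes N (supportComplex W ∅ S J) r := by
  have hfil (m : ℕ) (hm : m ≤ d + 1) :
      ExtVanishes N (supportComplex (W ∩ primesOfHeightGE A m) ∅ S J) r := by
    induction hm using Nat.decreasingInduction with
    | self =>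
      rw [primesOfHeightGE_eq_empty hd, Set.inter_empty]
      exact extVanishes_of_isStratum ⟨isUpperSet_empty, isUpperSet_empty, fun _ h => h.elim⟩
        fun _ h => h.elim
    | of_succ m _ ih =>
      exact ih.X₂_of_shortExact
        (extVanishes_of_isStratum (isStratum_inter_primesOfHeightGE hW m) fun q hq _ =>
          hV q hq.1)
        ((isShortExactOnInjectives_support_of_flat
          (Set.inter_subset_inter_right W (primesOfHeightGE_succ_subset m))
          (Set.empty_subset _)).shortExact J)
  simpa only [primesOfHeightGE_zero, Set.inter_univ] using hfil 0 (Nat.zero_le _)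

lemma extVanishes_primeSubquotient (hd : ringKrullDim A ≤ d)
    (hV : ∀ r > 0, ExtVanishes N (supportComplex Set.univ ∅ A J) r) (m : ℕ) (hm : m ≤ d + 1) :
    ∀ q ∈ primesOfHeightGE A m, ∀ r > (d : ℤ) - m, ExtVanishes N
      (supportComplex (primesAbove q.asIdeal) (primesStrictlyAbove q.asIdeal) A J) r := by
  induction hm using Nat.decreasingInduction with
  | self =>
    rw [primesOfHeightGE_eq_empty hd]
    exact fun q hq => hq.elim
  | of_succ m hm ih =>
    intro q hq r hr
    have hsub : primesStrictlyAbove q.asIdeal ⊆ primesAbove q.asIdeal := fun _ hp =>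
      Set.mem_ofPred.2 (le_of_lt hp)
    refine .X₃_of_shortExact ?_ (extVanishes_primesAbove hV q.asIdeal r (by omega))
      ((isShortExactOnInjectives_support_of_flat (S := A) hsub (Set.empty_subset _)).shortExact J)
    exact extVanishes_of_isUpperSet hd (fun _ _ hpp' hp => lt_of_lt_of_le hp hpp') fun p hp =>
      ih p (primesStrictlyAbove_subset_primesOfHeightGE_succ hq hp) _ (by push_cast; omega)

lemma extVanishes_primeSubquotient_of_flat_localization (hd : ringKrullDim A ≤ d)
    (hV : ∀ r > 0, ExtVanishes N (supportComplex Set.univ ∅ A J) r) {m : ℕ} (hm : m ≤ d + 1)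
    {q : PrimeSpectrum A} (hq : q ∈ primesOfHeightGE A m)
    [Module.Flat (Localization.AtPrime q.asIdeal) (Localization.AtPrime q.asIdeal ⊗[A] S)]
    (hr : r > (d : ℤ) - m) : ExtVanishes N
      (supportComplex (primesAbove q.asIdeal) (primesStrictlyAbove q.asIdeal) S J) r := by
  obtain ⟨I, s, hs⟩ := exists_finsuppTmul_bijective S q.asIdeal
  exact .supportComplex_of_finsuppTmul_bijective s
    (fun X _ => hs _ (PrimeSubquotient.isLocalAt _ X) (PrimeSubquotient.isPowTorsion X _))
    (extVanishes_primeSubquotient hd hV m hm q hq r hr)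

end HeightFiltration

section SyzygyInduction

variable {A : Type u} [CommRing A] [IsNoetherianRing A]

section Exact

variable {S F S' X : Type u} [AddCommGroup S] [Module A S] [AddCommGroup F] [Module A F]
  [AddCommGroup S'] [Module A S'] [AddCommGroup X] [Module A X] [Module.Injective A X]
  {f : S →ₗ[A] F} {g : F →ₗ[A] S'}

lemma IsStratum.lTensor_injective {W W' : Set (PrimeSpectrum A)} (h : IsStratum W W')
    (hf : Injective f) (hfg : Exact f g) (hg : Surjective g)
    (hfl : ∀ q ∈ W, q ∉ W' → Module.Flat (Localization.AtPrime q.asIdeal)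
      (Localization.AtPrime q.asIdeal ⊗[A] S')) :
    Injective (f.lTensor (SupportSubquotient W W' X)) := by
  refine (h.isDirectSum_ι.rTensor S).injective (h.isDirectSum_ι.rTensor F)
    (fun q => f.lTensor (PrimeSubquotient q.1.asIdeal X)) _
    (fun q x => (rTensor_lTensor_comm _ _ x).symm) fun q => ?_
  have := hfl q.1 q.2.1 q.2.2
  exact lTensor_injective_of_flat_localization q.1.asIdeal.primeCompl hf hfg hg fun s hs =>
    ((PrimeSubquotient.isLocalAt q.1.asIdeal X).tensor s hs).injective

variable [Module.Flat A F]

lemma lTensor_univ_primesOfHeightGE_injective (hf : Injective f) (hfg : Exact f g)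
    (hg : Surjective g) (m : ℕ)
    (hfl : ∀ q ∉ primesOfHeightGE A m, Module.Flat (Localization.AtPrime q.asIdeal)
      (Localization.AtPrime q.asIdeal ⊗[A] S')) :
    Injective (f.lTensor (SupportSubquotient Set.univ (primesOfHeightGE A m) X)) := by
  induction m with
  | zero =>
    have hmem (q : PrimeSpectrum A) : q ∈ primesOfHeightGE A 0 := by
      rw [primesOfHeightGE_zero]; trivial
    exact IsStratum.lTensor_injective
      ⟨isUpperSet_univ, primesOfHeightGE_isUpperSet 0, fun q _ hq => (hq (hmem q)).elim⟩
      hf hfg hg fun q _ hq => (hq (hmem q)).elim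
  | succ m ih =>
    have hsub := primesOfHeightGE_succ_subset (A := A) m
    exact lTensor_injective_of_extension (SupportSubquotient.map_exact X (Set.subset_univ _) hsub)
      (SupportSubquotient.map_surjective X _ hsub)
      (rTensor_supportSubquotientMap_injective (Set.subset_univ _) X)
      ((isStratum_primesOfHeightGE m).lTensor_injective hf hfg hg fun q _ => hfl q)
      (ih fun q hq => hfl q fun hq' => hq (hsub hq'))

lemma rTensor_univ_primesOfHeightGE_injective (hf : Injective f) (hfg : Exact f g)
    (hg : Surjective g) (m : ℕ)
    (hfl : ∀ q ∉ primesOfHeightGE A m, Module.Flat (Localization.AtPrime q.asIdeal)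
      (Localization.AtPrime q.asIdeal ⊗[A] S')) :
    Injective ((SupportSubquotient.map (Set.subset_univ _) le_rfl LinearMap.id :
      SupportSubquotient (primesOfHeightGE A m) (primesOfHeightGE A (m + 1)) X →ₗ[A]
        SupportSubquotient Set.univ (primesOfHeightGE A (m + 1)) X).rTensor S') := by
  have hsub := primesOfHeightGE_succ_subset (A := A) m
  rw [← LinearMap.lTensor_inj_iff_rTensor_inj]
  refine lTensor_injective_of_exact_of_exact_of_rTensor_injective hfg hg
    (SupportSubquotient.map_exact X (Set.subset_univ _) hsub)
    (SupportSubquotient.map_surjective X _ hsub) ?_ ?_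
  · rw [← LinearMap.lTensor_inj_iff_rTensor_inj]
    exact lTensor_univ_primesOfHeightGE_injective hf hfg hg m hfl
  · rw [LinearMap.lTensor_inj_iff_rTensor_inj]
    exact rTensor_supportSubquotientMap_injective (Set.subset_univ _) X

end Exact

lemma IsFlatSyzygySeq.flat_localization_of_notMem_primesOfHeightGE
    {S F : ℕ → Type u} [∀ j, AddCommGroup (S j)] [∀ j, AddCommGroup (F j)]
    [∀ j, Module A (S j)] [∀ j, Module A (F j)] {f : ∀ j, S (j + 1) →ₗ[A] F j}
    {g : ∀ j, F j →ₗ[A] S j} (h : IsFlatSyzygySeq A f g) {n : ℕ} (hn : Module.Flat A (S n))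
    (j : ℕ) :
    ∀ q ∉ primesOfHeightGE A (j + 1), Module.Flat (Localization.AtPrime q.asIdeal)
      (Localization.AtPrime q.asIdeal ⊗[A] S j) := fun q hq => by
  rw [mem_primesOfHeightGE, not_le] at hq
  exact h.flat_localization_of_height_le hn q.asIdeal
    (Order.le_of_lt_add_one (by exact_mod_cast hq))

variable [HasDerivedCategory (ModuleCat.{u} A)] {N : ModuleCat.{u} A}
  {J : CochainComplex (ModuleCat.{u} A) ℤ} [∀ n, Module.Injective A (J.X n)] {d : ℕ} {r : ℤ}

lemma extVanishes_primesOfHeightGE {S : Type u} [AddCommGroup S] [Module A S]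
    (hd : ringKrullDim A ≤ d)
    (hV : ∀ r > 0, ExtVanishes N (supportComplex Set.univ ∅ A J) r) {j : ℕ} (hj : j ≤ d)
    (hfl : ∀ q ∉ primesOfHeightGE A (j + 1), Module.Flat (Localization.AtPrime q.asIdeal)
      (Localization.AtPrime q.asIdeal ⊗[A] S)) (hr : r > (d : ℤ) - j) :
    ExtVanishes N (supportComplex (primesOfHeightGE A j) (primesOfHeightGE A (j + 1)) S J) r := by
  refine extVanishes_of_isStratum (isStratum_primesOfHeightGE j) fun q hq hq' => ?_
  have := hfl q hq'
  exact extVanishes_primeSubquotient_of_flat_localization hd hV (hj.trans d.le_succ) hq hr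

lemma extVanishes_univ_primesOfHeightGE_of_flat {F : Type u} [AddCommGroup F] [Module A F]
    [Module.Flat A F] (hd : ringKrullDim A ≤ d)
    (hV : ∀ r > 0, ExtVanishes N (supportComplex Set.univ ∅ A J) r)
    (hF : ExtVanishes N (supportComplex Set.univ ∅ F J) r) {j : ℕ} (hj : j ≤ d + 1)
    (hr : r > (d : ℤ) - j + 1) :
    ExtVanishes N (supportComplex Set.univ (primesOfHeightGE A j) F J) r :=
  .X₃_of_shortExact
    (extVanishes_of_isUpperSet hd (primesOfHeightGE_isUpperSet j) fun _ hq =>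
      extVanishes_primeSubquotient_of_flat_localization hd hV hj hq (by omega))
    hF
    ((isShortExactOnInjectives_support_of_flat (Set.subset_univ _)
      (Set.empty_subset _)).shortExact J)

variable {S F : ℕ → Type u} [∀ j, AddCommGroup (S j)] [∀ j, AddCommGroup (F j)]
  [∀ j, Module A (S j)] [∀ j, Module A (F j)] {f : ∀ j, S (j + 1) →ₗ[A] F j}
  {g : ∀ j, F j →ₗ[A] S j}

theorem IsFlatSyzygySeq.extVanishes_univ_primesOfHeightGE (h : IsFlatSyzygySeq A f g) {n : ℕ}
    (hn : Module.Flat A (S n)) (hd : ringKrullDim A ≤ d)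
    (hV : ∀ r > 0, ExtVanishes N (supportComplex Set.univ ∅ A J) r)
    (hF : ∀ j, ∀ r > 0, ExtVanishes N (supportComplex Set.univ ∅ (F j) J) r) {j : ℕ} (hj : j ≤ d) :
    ∀ r > 0, r > (d : ℤ) - j →
      ExtVanishes N (supportComplex Set.univ (primesOfHeightGE A (j + 1)) (S j) J) r := by
  have hflat := h.flat
  have hfl := h.flat_localization_of_notMem_primesOfHeightGE hn
  induction j with
  | zero =>
    intro r _ hr
    simpa only [primesOfHeightGE_zero] using extVanishes_primesOfHeightGE hd hV hj (hfl 0) hr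
  | succ j ih =>
    intro r hr0 hr φ
    have hsub := primesOfHeightGE_succ_subset (A := A) (j + 1)
    have hsupp := isShortExactOnInjectives_support (S := S (j + 1)) (Set.subset_univ _) hsub
      fun X _ => rTensor_univ_primesOfHeightGE_injective (h.injective (j + 1)) (h.exact (j + 1))
        (h.surjective (j + 1)) (j + 1) fun q hq => hfl (j + 1) q fun hq' => hq (hsub hq')
    have hmod := isShortExactOnInjectives_module (W := Set.univ) (h.exact j) (h.surjective j)
      fun X _ => lTensor_univ_primesOfHeightGE_injective (X := X) (h.injective j) (h.exact j)
        (h.surjective j) (j + 1) (hfl j)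
    have hmid := extVanishes_univ_primesOfHeightGE_of_flat hd hV (hF j r hr0)
      (show j + 1 + 1 ≤ d + 1 by omega) (by push_cast at hr ⊢; omega)
    obtain ⟨φ, rfl⟩ := (extVanishes_primesOfHeightGE hd hV hj (hfl (j + 1)) hr).exists_eq_map_g_comp
      (hsupp.shortExact J) φ
    obtain ⟨φ, rfl⟩ := (ih (by omega) (r + 1) (by omega)
      (by push_cast at hr; omega)).exists_eq_map_f_comp (hmod.shortExact J) φ
    have hcomm : (hsupp.shortComplex J).g ≫ (hmod.shortComplex J).f =
        termwiseMap (supportTensorMap le_rfl le_rfl (f j)) J ≫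
          termwiseMap (supportTensorMap le_rfl hsub LinearMap.id) J := by
      rw [← NatTrans.comp_app, ← NatTrans.comp_app, ← NatTrans.mapHomologicalComplex_comp,
        ← NatTrans.mapHomologicalComplex_comp, supportTensorMap_comp, supportTensorMap_comp]
      rfl
    rw [← Functor.map_comp_assoc, hcomm, Functor.map_comp_assoc, hmid (_ ≫ φ), comp_zero]

end SyzygyInduction

/-! ### Modules of finite flat dimension -/

section CharacterModule

variable {A : Type*} [CommRing A] {M M' M'' : Type*} [AddCommGroup M] [AddCommGroup M']
  [AddCommGroup M''] [Module A M] [Module A M'] [Module A M'']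

lemma characterModule_dual_exact {f : M →ₗ[A] M'} {g : M' →ₗ[A] M''} (hfg : Exact f g)
    (hg : Surjective g) : Exact (CharacterModule.dual g) (CharacterModule.dual f) := by
  refine fun c => ⟨fun hc => ?_, ?_⟩
  · have hker : g.toAddMonoidHom.ker ≤ AddMonoidHom.ker c := fun y hy => by
      obtain ⟨x, rfl⟩ := (hfg y).1 hy
      exact DFunLike.congr_fun hc x
    refine ⟨g.toAddMonoidHom.liftOfSurjective hg ⟨c, hker⟩, ?_⟩
    exact g.toAddMonoidHom.liftOfRightInverse_comp _ _ ⟨c, hker⟩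
  · rintro ⟨c, rfl⟩
    ext x
    exact (congrArg c (hfg.apply_apply_eq_zero x)).trans (map_zero c)

end CharacterModule

section ShortExact

variable {A : Type u} [CommRing A] {M M' M'' : Type u} [AddCommGroup M] [AddCommGroup M']
  [AddCommGroup M''] [Module A M] [Module A M'] [Module A M'']

/-- The short complex of modules with maps `f` and `g`. -/
abbrev shortComplexOfExact {f : M →ₗ[A] M'} {g : M' →ₗ[A] M''} (hfg : Exact f g) :
    ShortComplex (ModuleCat.{u} A) :=
  .mk (ModuleCat.ofHom f) (ModuleCat.ofHom g) (ModuleCat.hom_ext hfg.linearMap_comp_eq_zero)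

lemma shortComplexOfExact_shortExact {f : M →ₗ[A] M'} {g : M' →ₗ[A] M''} (hf : Injective f)
    (hfg : Exact f g) (hg : Surjective g) : (shortComplexOfExact hfg).ShortExact :=
  .mk' ((ShortComplex.ShortExact.moduleCat_exact_iff_function_exact _).2 hfg)
    ((ModuleCat.mono_iff_injective _).2 hf) ((ModuleCat.epi_iff_surjective _).2 hg)

lemma flat_iff_injective_characterModule :
    Module.Flat A M ↔ CategoryTheory.Injective (ModuleCat.of A (CharacterModule M)) :=
  Module.Flat.iff_characterModule_injective.trans (Module.injective_iff_injective_object A _)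

end ShortExact

section FlatDimension

variable {A : Type u} [CommRing A] {S F : ℕ → Type u} [∀ j, AddCommGroup (S j)]
  [∀ j, AddCommGroup (F j)] [∀ j, Module A (S j)] [∀ j, Module A (F j)]
  {f : ∀ j, S (j + 1) →ₗ[A] F j} {g : ∀ j, F j →ₗ[A] S j}

lemma IsFlatSyzygySeq.flat_iff_hasInjectiveDimensionLE (h : IsFlatSyzygySeq A f g) (n : ℕ) :
    Module.Flat A (S n) ↔
      HasInjectiveDimensionLE (ModuleCat.of A (CharacterModule (S 0))) n := by
  induction n generalizing S F with
  | zero =>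
    rw [flat_iff_injective_characterModule]
    exact injective_iff_hasInjectiveDimensionLT_one
  | succ n ih =>
    have hshift : IsFlatSyzygySeq A (fun j => f (j + 1)) fun j => g (j + 1) :=
      ⟨fun j => h.injective _, fun j => h.exact _, fun j => h.surjective _, fun j => h.flat _⟩
    have hdual := shortComplexOfExact_shortExact
      (CharacterModule.dual_injective_of_surjective _ (h.surjective 0))
      (characterModule_dual_exact (h.exact 0) (h.surjective 0))
      (CharacterModule.dual_surjective_of_injective _ (h.injective 0))
    exact (ih hshift).trans (hdual.hasInjectiveDimensionLT_X₃_iff n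
      (flat_iff_injective_characterModule.1 (h.flat 0)))

/-- The iterated kernels of the canonical free covers, starting from `C`. -/
noncomputable def freeSyzygy (C : ModuleCat.{u} A) : ℕ → ModuleCat.{u} A
  | 0 => C
  | j + 1 => ModuleCat.of A (LinearMap.ker (Finsupp.linearCombination A (@id (freeSyzygy C j))))

lemma isFlatSyzygySeq_freeSyzygy (C : ModuleCat.{u} A) :
    IsFlatSyzygySeq A (S := fun j => freeSyzygy C j) (F := fun j => freeSyzygy C j →₀ A)
      (fun j => (LinearMap.ker (Finsupp.linearCombination A (@id (freeSyzygy C j)))).subtype)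
      (fun _ => Finsupp.linearCombination A id) where
  injective _ := Submodule.subtype_injective _
  exact _ := LinearMap.exact_subtype_ker_map _
  surjective _ := Finsupp.linearCombination_id_surjective A _
  flat _ := inferInstance

end FlatDimension

section SupportComplexUniv

open DerivedCategory

variable {A : Type u} [CommRing A]

/-- The isomorphism `X ≃ Γ_W X / Γ_∅ X` for `W` the whole spectrum. -/
noncomputable def supportSubquotientUnivEquiv (X : Type u) [AddCommGroup X] [Module A X] :
    X ≃ₗ[A] SupportSubquotient (Set.univ : Set (PrimeSpectrum A)) ∅ X :=
  (Submodule.topEquiv.symm.trans (LinearEquiv.ofEq _ _ (supportedIn_univ X).symm)).trans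
    (supportSubquotientEmptyEquiv X Set.univ).symm

instance (S : Type u) [AddCommGroup S] [Module A S] [Module.Flat A S] :
    (supportTensor (Set.univ : Set (PrimeSpectrum A)) ∅ S).PreservesHomology := by
  refine Functor.preservesHomology_of_map_exact _ fun T hT => ?_
  rw [ShortComplex.ShortExact.moduleCat_exact_iff_function_exact] at hT ⊢
  refine Module.Flat.rTensor_exact S ?_
  exact Exact.of_ladder_linearEquiv_of_exact (e₁ := supportSubquotientUnivEquiv T.X₁)
    (e₂ := supportSubquotientUnivEquiv T.X₂) (e₃ := supportSubquotientUnivEquiv T.X₃) rfl rfl hT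

/-- Since `J ≅ A` in the derived category, `(Γ_Spec J / Γ_∅ J) ⊗ S ≅ S` for `S` flat. -/
noncomputable def supportComplexUnivIso (S : ModuleCat.{u} A) [Module.Flat A S]
    [HasDerivedCategory (ModuleCat.{u} A)] :
    Q.obj (supportComplex Set.univ ∅ S (injectiveResolution (ModuleCat.of A A)).cochainComplex) ≅
      Q.obj (singleZero S) :=
  let G := supportTensor (Set.univ : Set (PrimeSpectrum A)) ∅ S
  let ι : singleZero (ModuleCat.of A A) ⟶ _ := (injectiveResolution (ModuleCat.of A A)).ι'
  have : QuasiIso ι := inferInstanceAs (QuasiIso (injectiveResolution (ModuleCat.of A A)).ι')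
  have : QuasiIso ((G.mapHomologicalComplex (ComplexShape.up ℤ)).map ι) := inferInstance
  let e : G.obj (ModuleCat.of A A) ≅ S := LinearEquiv.toModuleIso
    (((supportSubquotientUnivEquiv A).symm.rTensor S).trans (TensorProduct.lid A S))
  (asIso (Q.map ((G.mapHomologicalComplex (ComplexShape.up ℤ)).map ι))).symm ≪≫
    Q.mapIso ((HomologicalComplex.singleMapHomologicalComplex G (ComplexShape.up ℤ) 0).app
      (ModuleCat.of A A) ≪≫ (HomologicalComplex.single _ (ComplexShape.up ℤ) 0).mapIso e)

end SupportComplexUniv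

section ModuleVanishing

open DerivedCategory

variable {A : Type u} [CommRing A] [HasDerivedCategory (ModuleCat.{u} A)] {N : ModuleCat.{u} A}
  {r : ℤ}

lemma ExtVanishes.singleZero_of_projective (P : ModuleCat.{u} A) [Projective P] (hr : 0 < r) :
    ExtVanishes N (singleZero P) r := fun φ => by
  have := CochainComplex.isStrictlyLE_shift
    ((CochainComplex.singleFunctor (ModuleCat.{u} A) 0).obj N) 0 r (-r) (by omega)
  rw [← cancel_mono ((Q.commShiftIso r).inv.app _), zero_comp]
  exact from_singleFunctor_obj_eq_zero_of_projective (P := P)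
    (L := ((CochainComplex.singleFunctor (ModuleCat.{u} A) 0).obj N)⟦r⟧) (i := 0)
    (φ ≫ (Q.commShiftIso r).inv.app _) (-r) (by omega)

variable {S F : ℕ → Type u} [∀ j, AddCommGroup (S j)] [∀ j, AddCommGroup (F j)]
  [∀ j, Module A (S j)] [∀ j, Module A (F j)] {f : ∀ j, S (j + 1) →ₗ[A] F j}
  {g : ∀ j, F j →ₗ[A] S j}

lemma IsFlatSyzygySeq.extVanishes_zero (h : IsFlatSyzygySeq A f g)
    (hF : ∀ j, ∀ r > 0, ExtVanishes N (singleZero (.of A (F j))) r) {n : ℕ}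
    (hn : ∀ r > 0, ExtVanishes N (singleZero (.of A (S n))) r) (hr : r > n) :
    ExtVanishes N (singleZero (.of A (S 0))) r := by
  refine Nat.decreasingInduction (n := n)
    (motive := fun j _ => ∀ r : ℤ, r > n - j → ExtVanishes N (singleZero (.of A (S j))) r)
    (fun j _ ih r hr => ?_) (fun r hr => hn r (by omega)) n.zero_le r (by simpa using hr)
  exact .X₃_of_shortExact (ih _ (by push_cast; omega)) (hF j r (by omega))
    ((shortComplexOfExact_shortExact (h.injective j) (h.exact j) (h.surjective j)).map_of_exact
      (HomologicalComplex.single (ModuleCat.{u} A) (ComplexShape.up ℤ) 0))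

variable [IsNoetherianRing A] {d : ℕ}

lemma IsFlatSyzygySeq.extVanishes_of_projective (h : IsFlatSyzygySeq A f g)
    (hF : ∀ j, Module.Projective A (F j)) {n : ℕ} (hn : Module.Flat A (S n))
    (hd : ringKrullDim A ≤ d) (hr : r > d) : ExtVanishes N (singleZero (.of A (S 0))) r := by
  let J := (injectiveResolution (ModuleCat.of A A)).cochainComplex
  have hJ (m : ℤ) : Module.Injective A (J.X m) :=
    (Module.injective_iff_injective_object A _).2
      (inferInstanceAs (CategoryTheory.Injective (J.X m)))
  have hP (P : Type u) [AddCommGroup P] [Module A P] [Module.Projective A P] (r : ℤ) (hr : r > 0) :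
      ExtVanishes N (singleZero (.of A P)) r :=
    have := (IsProjective.iff_projective P).1 ‹_›
    .singleZero_of_projective _ hr
  have hU (P : Type u) [AddCommGroup P] [Module A P] [Module.Projective A P] (r : ℤ) (hr : r > 0) :
      ExtVanishes N (supportComplex Set.univ ∅ P J) r :=
    (hP P r hr).of_iso (supportComplexUnivIso (.of A P)).symm
  have hSd : Module.Flat A (S d) := h.flat_of_ringKrullDim_le hn hd
  refine h.extVanishes_zero (fun j => hP (F j)) (fun r hr => ?_) hr
  have hvan := h.extVanishes_univ_primesOfHeightGE hn hd (hU A) (fun j => hU (F j)) le_rfl r hr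
    (by omega)
  rw [primesOfHeightGE_eq_empty hd] at hvan
  exact hvan.of_iso (supportComplexUnivIso (.of A (S d)))

theorem IsFlatSyzygySeq.extVanishes (h : IsFlatSyzygySeq A f g) {n : ℕ} (hn : Module.Flat A (S n))
    (hd : ringKrullDim A ≤ d) (hr : r > d) : ExtVanishes N (singleZero (.of A (S 0))) r := by
  have hfree := isFlatSyzygySeq_freeSyzygy (ModuleCat.of A (S 0))
  have hflat := (hfree.flat_iff_hasInjectiveDimensionLE n).2
    ((h.flat_iff_hasInjectiveDimensionLE n).1 hn)
  exact hfree.extVanishes_of_projective (fun _ => inferInstance) hflat hd hr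

end ModuleVanishing

/-! ### Bounded complexes of flat modules -/

section Single

lemma exists_shortExact_single {C : Type*} [Category* C] [Abelian C]
    {K : CochainComplex C ℤ} {c : ℤ} (hK : IsZero (K.X (c + 1))) :
    ∃ (L : CochainComplex C ℤ)
      (φ : (HomologicalComplex.single C (ComplexShape.up ℤ) c).obj (K.X c) ⟶ K) (π : K ⟶ L)
      (w : φ ≫ π = 0), (ShortComplex.mk φ π w).ShortExact ∧ IsZero (L.X c) ∧
        ∀ j ≠ c, Nonempty (K.X j ≅ L.X j) := by
  let φ : (HomologicalComplex.single C (ComplexShape.up ℤ) c).obj (K.X c) ⟶ K :=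
    HomologicalComplex.mkHomFromSingle (𝟙 _) fun j hj => by
      obtain rfl : c + 1 = j := hj
      exact hK.eq_of_tgt _ _
  have hφ : IsIso (φ.f c) := by
    rw [HomologicalComplex.mkHomFromSingle_f, Category.comp_id]
    infer_instance
  have hzero (j) (hj : j ≠ c) := HomologicalComplex.isZero_single_obj_X (ComplexShape.up ℤ) c
    (K.X c) j hj
  have : Mono φ := HomologicalComplex.mono_of_mono_f φ fun j => by
    obtain rfl | hj := eq_or_ne j c
    · infer_instance
    · exact ⟨fun _ _ _ => (hzero j hj).eq_of_tgt _ _⟩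
  have hS : (ShortComplex.mk φ (cokernel.π φ) (cokernel.condition φ)).ShortExact :=
    .mk' (ShortComplex.exact_of_g_is_cokernel _ (cokernelIsCokernel φ)) this inferInstance
  have hSj (j) := hS.map_of_exact (HomologicalComplex.eval _ _ j)
  refine ⟨_, φ, _, _, hS, (hSj c).isIso_f_iff.1 hφ, fun j hj => ?_⟩
  have := (hSj j).isIso_g_iff.2 (hzero j hj)
  exact ⟨@asIso _ _ _ _ _ this⟩

end Single

section BoundedComplex

open DerivedCategory

variable {A : Type u} [CommRing A] [HasDerivedCategory (ModuleCat.{u} A)] {N : ModuleCat.{u} A}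

lemma ExtVanishes.singleZero_of_iso {M M' : ModuleCat.{u} A} {r : ℤ}
    (h : ExtVanishes N (singleZero M) r) (e : M ≅ M') : ExtVanishes N (singleZero M') r :=
  h.of_iso (Q.mapIso ((HomologicalComplex.single _ (ComplexShape.up ℤ) 0).mapIso e))

lemma ExtVanishes.single {M : ModuleCat.{u} A} {c r : ℤ}
    (h : ExtVanishes N (singleZero M) (r + c)) :
    ExtVanishes N ((HomologicalComplex.single _ (ComplexShape.up ℤ) c).obj M) r := fun φ => by
  let e : (Q.obj ((HomologicalComplex.single _ (ComplexShape.up ℤ) c).obj M))⟦c⟧ ≅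
      Q.obj (singleZero M) :=
    ((singleFunctors (ModuleCat.{u} A)).shiftIso c 0 c (add_zero c)).app M
  let α := (shiftFunctorAdd (DerivedCategory (ModuleCat.{u} A)) r c).inv.app (Q.obj (singleZero N))
  apply (shiftFunctor (DerivedCategory (ModuleCat.{u} A)) c).map_injective
  rw [Functor.map_zero, ← cancel_epi e.inv, ← cancel_mono α, Category.assoc, comp_zero, zero_comp]
  exact h (e.inv ≫ φ⟦c⟧' ≫ α)

lemma ExtVanishes.of_bounded {d i r : ℤ} (hr : r > d - i) (m : ℕ)
    {K : CochainComplex (ModuleCat.{u} A) ℤ} (hK : ∀ j, j < i ∨ i + m ≤ j → IsZero (K.X j))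
    (hX : ∀ j, ∀ s > d, ExtVanishes N (singleZero (K.X j)) s) : ExtVanishes N K r := by
  induction m generalizing K with
  | zero =>
    refine .of_isZero ((IsZero.iff_id_eq_zero _).2 ?_)
    ext j : 1
    exact (hK j (by push_cast; omega)).eq_of_src _ _
  | succ m ih =>
    obtain ⟨L, φ, π, w, hS, hLc, hL⟩ := exists_shortExact_single (K := K) (c := i + m)
      (hK _ (by push_cast; omega))
    refine .X₂_of_shortExact (.single (hX _ _ (by omega))) (ih (fun j hj => ?_) fun j s hs => ?_) hS
    · obtain rfl | hj' := eq_or_ne j (i + m)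
      · exact hLc
      · exact (hK j (by push_cast; omega)).of_iso (hL j hj').some.symm
    · obtain rfl | hj := eq_or_ne j (i + m)
      · exact .of_isZero (Functor.map_isZero _ hLc)
      · exact (hX j s hs).singleZero_of_iso (hL j hj).some

end BoundedComplex

section FlatComplex

open DerivedCategory

variable {A : Type u} [CommRing A] {F : CochainComplex (ModuleCat.{u} A) ℤ}

lemma exact_fromOpcycles_pOpcycles (i : ℤ) {j : ℤ} (hij : i + 1 = j) :
    Exact (F.fromOpcycles i j).hom (F.pOpcycles j).hom := by
  have hex : Exact (F.d i j).hom (F.pOpcycles j).hom :=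
    (ShortComplex.ShortExact.moduleCat_exact_iff_function_exact _).1
      (ShortComplex.exact_of_g_is_cokernel (.mk _ _ (F.d_pOpcycles i j))
        (F.opcyclesIsCokernel i j (by simp [← hij])))
  rw [← F.p_fromOpcycles i j, ModuleCat.hom_comp] at hex
  exact (((ModuleCat.epi_iff_surjective _).1 inferInstance).comp_exact_iff_exact).1 hex

lemma isFlatSyzygySeq_opcycles (hflat : ∀ j, Module.Flat A (F.X j)) {i : ℤ}
    (hH : ∀ j < i, IsZero (F.homology j)) :
    IsFlatSyzygySeq A (S := fun j => F.opcycles (i - j)) (F := fun j => F.X (i - j))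
      (fun j => (F.fromOpcycles (i - (j + 1 : ℕ)) (i - j)).hom)
      (fun j => (F.pOpcycles (i - j)).hom) where
  injective j := by
    rw [← ModuleCat.mono_iff_injective]
    exact Preadditive.mono_of_isZero_kernel' _
      (F.homologyIsKernel _ _ (by simp; omega)) (hH _ (by omega))
  exact j := exact_fromOpcycles_pOpcycles _ (by push_cast; omega)
  surjective j := (ModuleCat.epi_iff_surjective _).1 inferInstance
  flat j := hflat _

lemma flat_opcycles_of_isZero (hflat : ∀ j, Module.Flat A (F.X j)) {j : ℤ}
    (hj : IsZero (F.X (j - 1))) : Module.Flat A (F.opcycles j) :=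
  have := F.isIso_pOpcycles (j - 1) j (by simp) (hj.eq_of_src _ _)
  have := hflat j
  .of_linearEquiv (asIso (F.pOpcycles j)).toLinearEquiv.symm

variable [HasDerivedCategory (ModuleCat.{u} A)] {N : ModuleCat.{u} A} {d : ℕ}

/-- The isomorphism `F ≅ τ^{≥ i} F` in the derived category when `F` is exact below `i`. -/
noncomputable def isoTruncGE {i : ℤ} (hH : ∀ j < i, IsZero (F.homology j)) :
    Q.obj F ≅ Q.obj (F.truncGE i) :=
  have : F.IsGE i := (F.isGE_iff i).2 fun j hj =>
    (F.exactAt_iff_isZero_homology j).2 (hH j hj)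
  have := (F.quasiIso_πTruncGE_iff i).2 this
  asIso (Q.map (F.πTruncGE i))

variable [IsNoetherianRing A]

theorem extVanishes_of_flat_complex (hd : ringKrullDim A ≤ d)
    (hflat : ∀ j, Module.Flat A (F.X j)) {b c i r : ℤ}
    (hF : ∀ j, j < b ∨ c < j → IsZero (F.X j)) (hH : ∀ j < i, IsZero (F.homology j))
    (hr : r > d - i) : ExtVanishes N F r := by
  have hopcycles (s : ℤ) (hs : s > d) : ExtVanishes N (singleZero (F.opcycles i)) s := by
    have hn := flat_opcycles_of_isZero hflat (hF (i - (i - b).toNat - 1) (.inl (by omega)))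
    exact (isFlatSyzygySeq_opcycles hflat hH).extVanishes hn hd hs |>.singleZero_of_iso
      (eqToIso (by simp))
  have hlt (j) (hj : j < i) : IsZero ((F.truncGE i).X j) :=
    CochainComplex.isZero_of_isStrictlyGE _ i j hj
  have hgt (j) (hj : i < j) : (F.truncGE i).X j ≅ F.X j := F.truncGEXIso i j hj
  refine .of_iso (.of_bounded hr (max (c + 1 - i) 1).toNat ?_ fun j s hs => ?_)
    (isoTruncGE hH).symm
  · rintro j (hj | hj)
    · exact hlt j hj
    · exact (hF j (by omega)).of_iso (hgt j (by omega))
  · obtain hj | rfl | hj := lt_trichotomy j i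
    · exact .of_isZero (Functor.map_isZero _ (hlt j hj))
    · exact (hopcycles s hs).singleZero_of_iso (F.truncGEXIsoOpcycles j).symm
    · have hX := (isFlatSyzygySeq_freeSyzygy (F.X j)).extVanishes (N := N) (n := 0) (hflat j) hd hs
      exact hX.singleZero_of_iso (hgt j hj).symm

end FlatComplex

end FlatKrull

theorem derivedCategory_projDim_le_krullDim_sub_inf
    (A : Type u) [CommRing A] [IsNoetherianRing A] [HasDerivedCategory (ModuleCat.{u} A)]
    (d : ℕ) (hd : ringKrullDim A = (d : WithBot ℕ∞))
    (M : CochainComplex (ModuleCat.{u} A) ℤ)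
    -- `M` has bounded cohomology, nonzero in some degree, with infimum `i` :
    (i : ℤ) (hi : ¬ IsZero (M.homology i)) (hinf : ∀ j < i, IsZero (M.homology j))
    (hbdd : ∃ b : ℤ, ∀ j > b, IsZero (M.homology j))
    -- `M` is quasi-isomorphic to a bounded complex `F` of flat `A`-modules,
    -- i.e. isomorphic to it in the derived category `D(A)` :
    (F : CochainComplex (ModuleCat.{u} A) ℤ)
    (hflat : ∀ j : ℤ, Module.Flat A (F.X j))
    (hFbdd : ∃ b c : ℤ, ∀ j : ℤ, j < b ∨ c < j → IsZero (F.X j))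
    (hqis : Nonempty (DerivedCategory.Q.obj F ≅ DerivedCategory.Q.obj M)) :
    ∀ (N : ModuleCat.{u} A) (k : ℤ), (d : ℤ) - i < k →
      Subsingleton (DerivedCategory.Q.obj M ⟶
        (DerivedCategory.Q.obj
          ((HomologicalComplex.single (ModuleCat.{u} A) (ComplexShape.up ℤ) 0).obj N))⟦k⟧) := by
  intro N k hk
  obtain ⟨b, c, hF⟩ := hFbdd
  obtain ⟨e⟩ := hqis
  have hH : ∀ j < i, IsZero (F.homology j) := fun j hj => (hinf j hj).of_iso <|
    ((DerivedCategory.homologyFunctorFactors _ j).app F).symm ≪≫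
      (DerivedCategory.homologyFunctor _ j).mapIso e ≪≫
        (DerivedCategory.homologyFunctorFactors _ j).app M
  have hM : FlatKrull.ExtVanishes N M k :=
    (FlatKrull.extVanishes_of_flat_complex hd.le hflat hF hH hk).of_iso e
  exact ⟨fun f g => (hM f).trans (hM g).symm⟩
end

section
/- Let A be a commutative ring, let M be a cochain complex of A-modules with H^j(M) = 0 for all j > s, and let N be a cochain complex of A-modules with H^j(N) = 0 for all j < t. Then Hom_{D(A)}(M, N[k]) = 0 for every integer k < t − s, and there is an isomorphism Hom_{D(A)}(M, N[t−s]) ≅ Hom_A(H^s(M), H^t(N)). -/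
/-!
STATEMENT 6: Let A be a commutative ring, M a cochain complex of A-modules with
H^j(M) = 0 for all j > s, and N a cochain complex of A-modules with H^j(N) = 0 for all
j < t.  Then Hom_{D(A)}(M, N[k]) = 0 for every integer k < t − s, and
Hom_{D(A)}(M, N[t−s]) ≅ Hom_A(H^s(M), H^t(N)).
-/

open CategoryTheory Limits

universe u

/-!
For the canonical t-structure, `M` is `≤ s` and `N[k]` is `≥ t - k`, so orthogonality gives the
vanishing when `s < t - k`. For `k = t - s` both conditions are in degree `s`: the truncation
morphisms `M ⟶ τ≥s M` and `τ≤s N[k] ⟶ N[k]` induce isomorphisms on `H^s` by the long exact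
homology sequence, and bijections on morphisms by orthogonality. This replaces `M` and `N[k]` by
objects concentrated in degree `s`, on which the functor `H^s` is fully faithful.
-/

section FunctorMap

variable {D E : Type*} [Category* D] [Category* E] (F : D ⥤ E)

theorem bijective_map_of_precomp {X X' Y : D} (p : X ⟶ X') [IsIso (F.map p)]
    (hp : Function.Bijective (fun f : X' ⟶ Y => p ≫ f))
    (hF : Function.Bijective (F.map : (X' ⟶ Y) → _)) :
    Function.Bijective (F.map : (X ⟶ Y) → _) := by
  have hcomp : F.map ∘ (fun f : X' ⟶ Y => p ≫ f) = (asIso (F.map p)).symm.homFromEquiv ∘ F.map := by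
    ext f
    simp
  rw [← Function.Bijective.of_comp_iff _ hp, hcomp]
  exact (Equiv.bijective _).comp hF

theorem bijective_map_of_postcomp {X Y Y' : D} (i : Y' ⟶ Y) [IsIso (F.map i)]
    (hi : Function.Bijective (fun f : X ⟶ Y' => f ≫ i))
    (hF : Function.Bijective (F.map : (X ⟶ Y') → _)) :
    Function.Bijective (F.map : (X ⟶ Y) → _) := by
  have hcomp : F.map ∘ (fun f : X ⟶ Y' => f ≫ i) = (asIso (F.map i)).homToEquiv ∘ F.map := by
    ext f
    simp
  rw [← Function.Bijective.of_comp_iff _ hi, hcomp]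
  exact (Equiv.bijective _).comp hF

theorem bijective_map_of_essImage {B : Type*} [Category* B] {G : B ⥤ D} [G.Full]
    (hGF : (G ⋙ F).FullyFaithful) {X Y : D} (hX : G.essImage X) (hY : G.essImage Y) :
    Function.Bijective (F.map : (X ⟶ Y) → _) := by
  obtain ⟨X₀, ⟨a⟩⟩ := hX
  obtain ⟨Y₀, ⟨b⟩⟩ := hY
  have : G.Faithful := by
    have := hGF.faithful
    exact Functor.Faithful.of_comp G F
  have hG : Function.Bijective (G.map : (X₀ ⟶ Y₀) → _) := ⟨G.map_injective, G.map_surjective⟩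
  have hF : Function.Bijective (F.map : (G.obj X₀ ⟶ G.obj Y₀) → _) :=
    (Function.Bijective.of_comp_iff _ hG).1 (hGF.map_bijective X₀ Y₀)
  have hcomp : F.map ∘ a.homCongr b = (F.mapIso a).homCongr (F.mapIso b) ∘ F.map := by
    ext f
    simp
  rw [← Function.Bijective.of_comp_iff _ (a.homCongr b).bijective, hcomp]
  exact (Equiv.bijective _).comp hF

end FunctorMap

section TStructure

open Triangulated

variable {D : Type*} [Category* D] [Preadditive D] [HasZeroObject D] [HasShift D ℤ]
  [∀ n : ℤ, (shiftFunctor D n).Additive] [Pretriangulated D] (t : TStructure D)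

theorem subsingleton_hom_of_isLE_of_isGE (X Y : D) {a b : ℤ} (hab : a < b)
    [t.IsLE X a] [t.IsGE Y b] : Subsingleton (X ⟶ Y) :=
  subsingleton_of_forall_eq 0 fun f => t.zero f a b hab

theorem bijective_truncGEπ_app_comp (n : ℤ) (X Y : D) [t.IsGE Y n] :
    Function.Bijective (fun f : (t.truncGE n).obj X ⟶ Y => (t.truncGEπ n).app X ≫ f) :=
  ⟨fun _ _ h => t.from_truncGE_obj_ext h, fun f => ⟨t.descTruncGE f n, by simp⟩⟩

theorem bijective_comp_truncLEι_app (n : ℤ) (X Y : D) [t.IsLE X n] :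
    Function.Bijective (fun f : X ⟶ (t.truncLE n).obj Y => f ≫ (t.truncLEι n).app Y) :=
  ⟨fun _ _ h => t.to_truncLE_obj_ext h, fun f => ⟨t.liftTruncLE f n, by simp⟩⟩

end TStructure

section CanonicalTStructure

open DerivedCategory DerivedCategory.TStructure

universe w v u'

variable {C : Type u'} [Category.{v} C] [Abelian C] [HasDerivedCategory.{w} C]

theorem isIso_homologyFunctor_map_truncGEπ_app (X : DerivedCategory C) {n i : ℤ} (hi : n ≤ i) :
    IsIso ((homologyFunctor C i).map ((t.truncGEπ n).app X)) := by
  have hT := t.triangleLTGE_distinguished n X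
  have : Mono ((homologyFunctor C i).map ((t.truncGEπ n).app X)) :=
    (HomologySequence.mono_homologyMap_mor₂_iff _ hT i).2
      ((isZero_of_isLE ((t.truncLT n).obj X) (n - 1) i (by lia)).eq_of_src _ _)
  have : Epi ((homologyFunctor C i).map ((t.truncGEπ n).app X)) :=
    (HomologySequence.epi_homologyMap_mor₂_iff _ hT i (i + 1)).2
      ((isZero_of_isLE ((t.truncLT n).obj X) (n - 1) (i + 1) (by lia)).eq_of_tgt _ _)
  exact isIso_of_mono_of_epi _

theorem isIso_homologyFunctor_map_truncLEι_app (X : DerivedCategory C) {n i : ℤ} (hi : i ≤ n) :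
    IsIso ((homologyFunctor C i).map ((t.truncLEι n).app X)) := by
  have hT := t.triangleLEGT_distinguished n X
  have : Mono ((homologyFunctor C i).map ((t.truncLEι n).app X)) :=
    (HomologySequence.mono_homologyMap_mor₁_iff _ hT (i - 1) i).2
      ((isZero_of_isGE ((t.truncGT n).obj X) (n + 1) (i - 1) (by lia)).eq_of_src _ _)
  have : Epi ((homologyFunctor C i).map ((t.truncLEι n).app X)) :=
    (HomologySequence.epi_homologyMap_mor₁_iff _ hT i).2
      ((isZero_of_isGE ((t.truncGT n).obj X) (n + 1) i (by lia)).eq_of_tgt _ _)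
  exact isIso_of_mono_of_epi _

theorem essImage_singleFunctor_of_isGE_of_isLE (X : DerivedCategory C) (n : ℤ)
    [X.IsGE n] [X.IsLE n] : (singleFunctor C n).essImage X := by
  obtain ⟨Y, ⟨e⟩⟩ := exists_iso_singleFunctor_obj_of_isGE_of_isLE X n
  exact ⟨Y, ⟨e.symm⟩⟩

theorem bijective_homologyFunctor_map (X Y : DerivedCategory C) (n : ℤ) [X.IsLE n] [Y.IsGE n] :
    Function.Bijective ((homologyFunctor C n).map : (X ⟶ Y) → _) := by
  have := isIso_homologyFunctor_map_truncGEπ_app X (le_refl n)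
  have := isIso_homologyFunctor_map_truncLEι_app Y (le_refl n)
  refine bijective_map_of_precomp _ _ (bijective_truncGEπ_app_comp t n X Y) ?_
  refine bijective_map_of_postcomp _ _ (bijective_comp_truncLEι_app t n _ Y) ?_
  exact bijective_map_of_essImage _
    ((Functor.FullyFaithful.id C).ofIso (singleFunctorCompHomologyFunctorIso C n).symm)
    (essImage_singleFunctor_of_isGE_of_isLE _ n) (essImage_singleFunctor_of_isGE_of_isLE _ n)

theorem isLE_Q_obj_iff_isZero_homology (K : CochainComplex C ℤ) (n : ℤ) :
    (Q.obj K).IsLE n ↔ ∀ j > n, IsZero (K.homology j) := by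
  simp only [isLE_Q_obj_iff, CochainComplex.isLE_iff,
    HomologicalComplex.exactAt_iff_isZero_homology, gt_iff_lt]

theorem isGE_Q_obj_iff_isZero_homology (K : CochainComplex C ℤ) (n : ℤ) :
    (Q.obj K).IsGE n ↔ ∀ j < n, IsZero (K.homology j) := by
  simp only [isGE_Q_obj_iff, CochainComplex.isGE_iff,
    HomologicalComplex.exactAt_iff_isZero_homology]

/-- The identification `H^a(K[k]) ≅ H^b(K)` for `k + a = b`, where the left-hand side is formed in
the derived category and the right-hand side is the homology of the complex itself. -/
noncomputable def homologyFunctorObjShiftQObjIso (K : CochainComplex C ℤ) (k a b : ℤ)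
    (h : k + a = b) :
    (homologyFunctor C a).obj ((Q.obj K)⟦k⟧) ≅ K.homology b :=
  ((homologyFunctor C 0).shiftIso k a b h).app (Q.obj K) ≪≫ (homologyFunctorFactors C b).app K

theorem derivedCategory_hom_vanishing_and_bottom_iso_general
    (M N : CochainComplex C ℤ) (s t : ℤ)
    (hM : ∀ j > s, IsZero (M.homology j)) (hN : ∀ j < t, IsZero (N.homology j)) :
    (∀ k : ℤ, k < t - s → Subsingleton (Q.obj M ⟶ (Q.obj N)⟦k⟧)) ∧
    Nonempty ((Q.obj M ⟶ (Q.obj N)⟦t - s⟧) ≃+ (M.homology s ⟶ N.homology t)) := by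
  have := (isLE_Q_obj_iff_isZero_homology M s).2 hM
  have := (isGE_Q_obj_iff_isZero_homology N t).2 hN
  have hshift (k a : ℤ) (h : k + a = t) : ((Q.obj N)⟦k⟧).IsGE a := TStructure.t.isGE_shift _ t k a h
  constructor
  · intro k hk
    have := hshift k (t - k) (by lia)
    exact subsingleton_hom_of_isLE_of_isGE TStructure.t _ _ (show s < t - k by lia)
  · have := hshift (t - s) s (by lia)
    let onHomology := AddEquiv.ofBijective (homologyFunctor C s).mapAddHom
      (bijective_homologyFunctor_map (Q.obj M) ((Q.obj N)⟦t - s⟧) s)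
    let identification := Linear.homCongr ℤ ((homologyFunctorFactors C s).app M)
      (homologyFunctorObjShiftQObjIso N (t - s) s t (by lia))
    exact ⟨onHomology.trans identification.toAddEquiv⟩

end CanonicalTStructure

theorem derivedCategory_hom_vanishing_and_bottom_iso
    (A : Type u) [CommRing A] [HasDerivedCategory (ModuleCat.{u} A)]
    (M N : CochainComplex (ModuleCat.{u} A) ℤ) (s t : ℤ)
    (hM : ∀ j > s, IsZero (M.homology j)) (hN : ∀ j < t, IsZero (N.homology j)) :
    (∀ k : ℤ, k < t - s →
      Subsingleton (DerivedCategory.Q.obj M ⟶ (DerivedCategory.Q.obj N)⟦k⟧)) ∧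
    Nonempty ((DerivedCategory.Q.obj M ⟶ (DerivedCategory.Q.obj N)⟦t - s⟧) ≃+
      (M.homology s ⟶ N.homology t)) :=
  derivedCategory_hom_vanishing_and_bottom_iso_general M N s t hM hN
end
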